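/- At the right endpoint x = b the series ∑_{n=0}^∞ c_n y_n(b) converges, and its sum f̄(b) equals f(b) if sin β ≠ 0, while f̄(b) = 0 if sin β = 0 (the Dirichlet case y(b) = 0). -/

import Mathlib

/-- `(lam, y)` is an eigenpair of the Sturm–Liouville problem
`-y'' + q y = lam y` on `[a,b]` with separated boundary conditions
`y(a) cos α + y'(a) sin α = 0`, `y(b) cos β + y'(b) sin β = 0`. -/
def IsSLEigenpair (a b : ℝ) (q : ℝ → ℝ) (α β : ℝ) (lam : ℝ) (y : ℝ → ℝ) : Prop :=
  ∃ y' y'' : ℝ → ℝ,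
    (∀ x ∈ Set.Icc a b, HasDerivWithinAt y (y' x) (Set.Icc a b) x) ∧
    (∀ x ∈ Set.Icc a b, HasDerivWithinAt y' (y'' x) (Set.Icc a b) x) ∧
    ContinuousOn y'' (Set.Icc a b) ∧
    (∃ x ∈ Set.Icc a b, y x ≠ 0) ∧
    (∀ x ∈ Set.Icc a b, -(y'' x) + q x * y x = lam * y x) ∧
    y a * Real.cos α + y' a * Real.sin α = 0 ∧
    y b * Real.cos β + y' b * Real.sin β = 0

/-!
Put `κ² = -μ` with `κ` large. Expanding the resolvent at `μ` in eigenfunctions shows that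
`κ² (L - μ)⁻¹ f (b) = ∑ cₙ yₙ(b) κ² / (λₙ + κ²)`. If `sin β ≠ 0`, then `κ²` times the Green function
of `-d²/dx² + κ²` at the point `b` is a kernel of total mass close to one which concentrates at `b`,
and `q` is a small perturbation, so these Stieltjes means of the series tend to `f b`.

The series itself is recovered by a Tauberian argument. A Prüfer-type analysis of the solutions,
together with the bounded variation of `f`, gives `cₙ yₙ(b) = O(1 / √λₙ)` and a uniform lower bound
for the gaps `√λₙ₊₁ - √λₙ`; under these two conditions Karamata's method applies.

If `sin β = 0`, every `yₙ` vanishes at `b`.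
-/

namespace SturmLiouville

open Set Filter Topology MeasureTheory
open scoped unitInterval NNReal

/-! ### A Tauberian theorem for separated frequencies -/

/-- The sequence `k` starts at or above `c > 0` and increases by at least `c` at each step. -/
structure IsSeparated (c : ℝ) (k : ℕ → ℝ) : Prop where
  gap_pos : 0 < c
  gap_le_zero : c ≤ k 0
  add_gap_le_succ : ∀ j, k j + c ≤ k (j + 1)

namespace IsSeparated

variable {c : ℝ} {k : ℕ → ℝ}

theorem add_mul_gap_le (h : IsSeparated c k) (N i : ℕ) : k N + c * i ≤ k (N + i) := by
  induction i with
  | zero => simp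
  | succ i ih => push_cast; rw [← add_assoc]; linarith [h.add_gap_le_succ (N + i)]

theorem gap_mul_succ_le (h : IsSeparated c k) (j : ℕ) : c * (j + 1 : ℕ) ≤ k j := by
  have := h.add_mul_gap_le 0 j
  rw [zero_add] at this
  push_cast
  linarith [h.gap_le_zero]

theorem pos (h : IsSeparated c k) (j : ℕ) : 0 < k j :=
  (mul_pos h.gap_pos (by positivity)).trans_le (h.gap_mul_succ_le j)

theorem strictMono (h : IsSeparated c k) : StrictMono k :=
  strictMono_nat_of_lt_succ fun j => by linarith [h.add_gap_le_succ j, h.gap_pos]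

theorem tendsto_atTop (h : IsSeparated c k) : Tendsto k atTop atTop :=
  tendsto_atTop_mono h.gap_mul_succ_le <|
    (tendsto_natCast_atTop_atTop.comp (tendsto_add_atTop_nat 1)).const_mul_atTop h.gap_pos

end IsSeparated

theorem sub_div_one_add_sq_le_arctan_sub {u v : ℝ} (hu : 0 ≤ u) (huv : u ≤ v) :
    (v - u) / (1 + v ^ 2) ≤ Real.arctan v - Real.arctan u := by
  rw [div_eq_inv_mul]
  refine (convex_Icc u v).mul_sub_le_image_sub_of_le_deriv Real.continuous_arctan.continuousOn
    Real.differentiable_arctan.differentiableOn (fun x hx => ?_)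
    u (left_mem_Icc.2 huv) v (right_mem_Icc.2 huv) huv
  rw [interior_Icc] at hx
  simp only [Real.deriv_arctan, one_div]
  gcongr
  · linarith [hx.1]
  · exact hx.2.le

namespace IsSeparated

variable {c : ℝ} {k : ℕ → ℝ}

theorem sum_range_poisson_le (h : IsSeparated c k) {κ : ℝ} (hκ : 0 ≤ κ) (N : ℕ) :
    ∑ j ∈ Finset.range N, κ / (k j ^ 2 + κ ^ 2) ≤ 2 / c := by
  have hc := h.gap_pos
  rcases hκ.eq_or_lt with rfl | hκ
  · simpa using by positivity
  have term_le (j : ℕ) : κ / (k j ^ 2 + κ ^ 2) ≤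
      (Real.arctan (c * (j + 1 : ℕ) / κ) - Real.arctan (c * j / κ)) / c := by
    calc κ / (k j ^ 2 + κ ^ 2) ≤ κ / ((c * (j + 1 : ℕ)) ^ 2 + κ ^ 2) := by
          gcongr; exact h.gap_mul_succ_le j
      _ = (c * (j + 1 : ℕ) / κ - c * j / κ) / (1 + (c * (j + 1 : ℕ) / κ) ^ 2) / c := by
          push_cast; field_simp; ring
      _ ≤ _ := by
          gcongr
          exact sub_div_one_add_sq_le_arctan_sub (by positivity) (by gcongr; simp)
  calc ∑ j ∈ Finset.range N, κ / (k j ^ 2 + κ ^ 2)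
      ≤ ∑ j ∈ Finset.range N,
          (Real.arctan (c * (j + 1 : ℕ) / κ) - Real.arctan (c * j / κ)) / c :=
        Finset.sum_le_sum fun j _ => term_le j
    _ = Real.arctan (c * N / κ) / c := by
        rw [← Finset.sum_div, Finset.sum_range_sub fun j : ℕ => Real.arctan (c * j / κ)]
        simp
    _ ≤ 2 / c := by
        gcongr; linarith [Real.arctan_lt_pi_div_two (c * N / κ), Real.pi_le_four]

theorem summable_poisson (h : IsSeparated c k) {κ : ℝ} (hκ : 0 ≤ κ) :
    Summable fun j => κ / (k j ^ 2 + κ ^ 2) :=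
  summable_of_sum_range_le (fun _ => by positivity) (h.sum_range_poisson_le hκ)

theorem tsum_poisson_le (h : IsSeparated c k) {κ : ℝ} (hκ : 0 ≤ κ) :
    ∑' j, κ / (k j ^ 2 + κ ^ 2) ≤ 2 / c :=
  Real.tsum_le_of_sum_range_le (fun _ => by positivity) (h.sum_range_poisson_le hκ)

end IsSeparated

/-- The node `κ² / (t² + κ²)` of the unit interval, which decreases from `1` to `0` as the
frequency `t` passes through the scale `κ`. -/
noncomputable def node (κ t : ℝ) : I :=
  ⟨κ ^ 2 / (t ^ 2 + κ ^ 2), by positivity, div_le_one_of_le₀ (by nlinarith) (by positivity)⟩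

theorem coe_node (κ t : ℝ) : (node κ t : ℝ) = κ ^ 2 / (t ^ 2 + κ ^ 2) := rfl

/-- The weight `b_j x (1 - x)` at the node `x` of frequency `k_j`. The factor `x (1 - x)` makes the
weights summable at every scale. -/
noncomputable def nodeWeight (b k : ℕ → ℝ) (κ : ℝ) (j : ℕ) : ℝ :=
  b j * (node κ (k j) * (1 - node κ (k j)))

section Tauberian

variable {b k : ℕ → ℝ} {C c s : ℝ}

theorem nonneg_of_abs_le_div {x t : ℝ} (ht : 0 < t) (hx : |x| ≤ C / t) : 0 ≤ C := by
  simpa [ht.ne'] using mul_nonneg ((abs_nonneg x).trans hx) ht.le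

theorem abs_nodeWeight_le (h : IsSeparated c k) (hb : ∀ j, |b j| ≤ C / k j) (κ : ℝ) (j : ℕ) :
    |nodeWeight b k κ j| ≤ C * (|κ| / (k j ^ 2 + |κ| ^ 2)) := by
  have hk := h.pos j
  have hC := nonneg_of_abs_le_div hk (hb j)
  have hX := (node κ (k j)).2
  have hX' : 0 ≤ (node κ (k j) : ℝ) * (1 - node κ (k j)) := mul_nonneg hX.1 (sub_nonneg.2 hX.2)
  rw [nodeWeight, abs_mul, abs_of_nonneg hX']
  calc |b j| * (node κ (k j) * (1 - node κ (k j)))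
      ≤ C / k j * (node κ (k j) * (1 - node κ (k j))) := by gcongr; exact hb j
    _ = C * (k j * |κ| / (k j ^ 2 + |κ| ^ 2) * (|κ| / (k j ^ 2 + |κ| ^ 2))) := by
        rw [coe_node, ← sq_abs κ]; field_simp; ring
    _ ≤ C * (1 * (|κ| / (k j ^ 2 + |κ| ^ 2))) := by
        gcongr
        rw [div_le_one (by positivity)]
        nlinarith [sq_nonneg (k j - |κ|), mul_nonneg hk.le (abs_nonneg κ)]
    _ = _ := by rw [one_mul]

theorem norm_nodeWeight_mul_le (h : IsSeparated c k) (hb : ∀ j, |b j| ≤ C / k j) (κ : ℝ)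
    (g : C(I, ℝ)) (j : ℕ) :
    ‖nodeWeight b k κ j * g (node κ (k j))‖ ≤ C * (|κ| / (k j ^ 2 + |κ| ^ 2)) * ‖g‖ := by
  have hw := abs_nodeWeight_le h hb κ j
  rw [norm_mul]
  exact mul_le_mul hw (g.norm_coe_le_norm _) (norm_nonneg _) ((abs_nonneg _).trans hw)

theorem summable_nodeWeight_mul (h : IsSeparated c k) (hb : ∀ j, |b j| ≤ C / k j) (κ : ℝ)
    (g : C(I, ℝ)) : Summable fun j => nodeWeight b k κ j * g (node κ (k j)) :=
  .of_norm_bounded (((h.summable_poisson (abs_nonneg κ)).mul_left C).mul_right ‖g‖)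
    (norm_nodeWeight_mul_le h hb κ g)

/-- The functional `g ↦ ∑ b_j x_j (1 - x_j) g(x_j)`, where `x_j` is the node of frequency `k_j` at
scale `κ`. -/
noncomputable def weightedNodeSum (h : IsSeparated c k) (hb : ∀ j, |b j| ≤ C / k j) (κ : ℝ) :
    C(I, ℝ) →ₗ[ℝ] ℝ where
  toFun g := ∑' j, nodeWeight b k κ j * g (node κ (k j))
  map_add' g g' := by
    rw [← (summable_nodeWeight_mul h hb κ g).tsum_add (summable_nodeWeight_mul h hb κ g')]
    simp only [ContinuousMap.add_apply, mul_add]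
  map_smul' r g := by
    simp only [ContinuousMap.smul_apply, smul_eq_mul, RingHom.id_apply, ← tsum_mul_left,
      mul_left_comm r]

theorem weightedNodeSum_apply (h : IsSeparated c k) (hb : ∀ j, |b j| ≤ C / k j) (κ : ℝ)
    (g : C(I, ℝ)) : weightedNodeSum h hb κ g = ∑' j, nodeWeight b k κ j * g (node κ (k j)) := rfl

theorem abs_weightedNodeSum_le (h : IsSeparated c k) (hb : ∀ j, |b j| ≤ C / k j) (κ : ℝ)
    (g : C(I, ℝ)) : |weightedNodeSum h hb κ g| ≤ C * (2 / c) * ‖g‖ := by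
  have hC := nonneg_of_abs_le_div (h.pos 0) (hb 0)
  rw [weightedNodeSum_apply, ← Real.norm_eq_abs]
  refine (tsum_of_norm_bounded
    (((h.summable_poisson (abs_nonneg κ)).hasSum.mul_left C).mul_right ‖g‖)
    (norm_nodeWeight_mul_le h hb κ g)).trans ?_
  gcongr
  exact h.tsum_poisson_le (abs_nonneg κ)

/-- The subspace of vectors on which a family of functionals tends to `0`. -/
def tendstoZeroSubmodule {ι E : Type*} [AddCommGroup E] [Module ℝ E]
    (L : ι → E →ₗ[ℝ] ℝ) (l : Filter ι) : Submodule ℝ E where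
  carrier := {v | Tendsto (fun i => L i v) l (𝓝 0)}
  add_mem' hv hw := by simpa using hv.add hw
  zero_mem' := by simp [tendsto_const_nhds]
  smul_mem' r v hv := by simpa using hv.const_mul r

theorem isClosed_tendstoZeroSubmodule {ι E : Type*} [SeminormedAddCommGroup E] [NormedSpace ℝ E]
    {L : ι → E →ₗ[ℝ] ℝ} {M : ℝ} (hL : ∀ i v, |L i v| ≤ M * ‖v‖) (l : Filter ι) :
    IsClosed (tendstoZeroSubmodule L l : Set E) := by
  have hLip (i : ι) : LipschitzWith M.toNNReal (L i) :=
    AddMonoidHomClass.lipschitz_of_bound (L i) M (hL i)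
  exact (LipschitzWith.uniformEquicontinuous _ _ hLip).equicontinuous.isClosed_setOfPred_tendsto
    continuous_const

/-- The function `x ↦ 1 / (1 + d x)` on the unit interval. -/
noncomputable def invOneAddMul (d : ℝ≥0) : C(I, ℝ) where
  toFun x := 1 / (1 + d * (x : ℝ))
  continuous_toFun := continuous_const.div (by fun_prop) fun x =>
    (add_pos_of_pos_of_nonneg one_pos (mul_nonneg d.2 x.2.1)).ne'

theorem invOneAddMul_apply (d : ℝ≥0) (x : I) : invOneAddMul d x = 1 / (1 + d * (x : ℝ)) := rfl

theorem one_add_mul_mul_invOneAddMul (d : ℝ≥0) (x : I) :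
    (1 + d * (x : ℝ)) * invOneAddMul d x = 1 :=
  mul_one_div_cancel (add_pos_of_pos_of_nonneg one_pos (mul_nonneg d.2 x.2.1)).ne'

theorem norm_invOneAddMul_le (d : ℝ≥0) : ‖invOneAddMul d‖ ≤ 1 := by
  refine (ContinuousMap.norm_le _ zero_le_one).2 fun x => ?_
  have hdx : 0 ≤ d * (x : ℝ) := mul_nonneg d.2 x.2.1
  rw [invOneAddMul_apply, Real.norm_of_nonneg (by positivity)]
  exact div_le_one_of_le₀ (by linarith) (by positivity)

theorem tendsto_mul_invOneAddMul (g : C(I, ℝ)) :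
    Tendsto (fun n : ℕ => g * invOneAddMul (1 / (n + 1))) atTop (𝓝 g) := by
  have hle (d : ℝ≥0) : ‖invOneAddMul d - 1‖ ≤ d := by
    refine (ContinuousMap.norm_le _ d.2).2 fun x => ?_
    have hx : invOneAddMul d x - 1 = -(d * (x * invOneAddMul d x)) := by
      linear_combination one_add_mul_mul_invOneAddMul d x
    rw [ContinuousMap.sub_apply, ContinuousMap.one_apply, hx, norm_neg, norm_mul, norm_mul,
      Real.norm_of_nonneg d.coe_nonneg, Real.norm_of_nonneg x.2.1]
    exact mul_le_of_le_one_right d.2 (mul_le_one₀ x.2.2 (norm_nonneg _)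
      (((invOneAddMul d).norm_coe_le_norm x).trans (norm_invOneAddMul_le d)))
  have hone : Tendsto (fun n : ℕ => invOneAddMul (1 / (n + 1))) atTop (𝓝 1) := by
    refine tendsto_iff_norm_sub_tendsto_zero.2 <|
      squeeze_zero (fun _ => norm_nonneg _) (fun n => hle _) ?_
    simpa using tendsto_one_div_add_atTop_nhds_zero_nat (𝕜 := ℝ)
  simpa using hone.const_mul g

theorem eq_top_of_invOneAddMul_mem {V : Submodule ℝ C(I, ℝ)} (hV : IsClosed (V : Set C(I, ℝ)))
    (hmem : ∀ d : ℝ≥0, 0 < d → invOneAddMul d ∈ V) : V = ⊤ := by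
  set X : C(I, ℝ) := Polynomial.X.toContinuousMapOn I with hX
  have X_pow_mem (m : ℕ) (hm : ∀ d : ℝ≥0, 0 < d → X ^ m * invOneAddMul d ∈ V) : X ^ m ∈ V :=
    hV.mem_of_tendsto (tendsto_mul_invOneAddMul (X ^ m)) <|
      .of_forall fun n => hm _ (by positivity)
  have key (m : ℕ) : ∀ d : ℝ≥0, 0 < d → X ^ m * invOneAddMul d ∈ V := by
    induction m with
    | zero => simpa using hmem
    | succ m ih =>
      intro d hd
      have : X ^ (m + 1) * invOneAddMul d =
          (d : ℝ)⁻¹ • (X ^ m - X ^ m * invOneAddMul d) := by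
        ext x
        have := one_add_mul_mul_invOneAddMul d x
        simp only [hX, ContinuousMap.mul_apply, ContinuousMap.pow_apply, ContinuousMap.smul_apply,
          ContinuousMap.sub_apply, Polynomial.toContinuousMapOn_apply,
          Polynomial.toContinuousMap_apply, Polynomial.eval_X, smul_eq_mul]
        rw [eq_inv_mul_iff_mul_eq₀ (by exact_mod_cast hd.ne')]
        linear_combination (x : ℝ) ^ m * this
      rw [this]
      exact V.smul_mem _ (V.sub_mem (X_pow_mem m ih) (ih d hd))
  have poly_mem (p : Polynomial ℝ) : p.toContinuousMapOn I ∈ V := by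
    induction p using Polynomial.induction_on' with
    | add p q hp hq => convert V.add_mem hp hq using 1; ext; simp
    | monomial n a =>
      convert V.smul_mem a (X_pow_mem n (key n)) using 1
      ext; simp [hX]
  refine top_unique fun g _ => hV.closure_subset_iff.2 ?_ (?_ : g ∈ closure (polynomialFunctions I))
  · rintro _ ⟨p, -, rfl⟩
    exact poly_mem p
  · rw [← Subalgebra.topologicalClosure_coe, polynomialFunctions_closure_eq_top']
    trivial

theorem summable_mul_coe_node (h : IsSeparated c k) (hb : ∀ j, |b j| ≤ C / k j) (κ : ℝ) :
    Summable fun j => b j * node κ (k j) := by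
  refine .of_norm_bounded
    ((h.summable_poisson (abs_nonneg κ)).mul_left (C / k 0 * |κ|)) fun j => ?_
  have hC := nonneg_of_abs_le_div (h.pos 0) (hb 0)
  have := h.pos 0
  rw [norm_mul, Real.norm_of_nonneg (node κ (k j)).2.1, Real.norm_eq_abs]
  calc |b j| * node κ (k j) ≤ C / k 0 * node κ (k j) := by
        gcongr
        · exact (node κ (k j)).2.1
        · exact (hb j).trans (by gcongr; exact h.strictMono.monotone j.zero_le)
    _ = _ := by rw [coe_node, ← sq_abs κ]; ring

/-- Rescaling `κ` by `√(1 + d)` moves the node `x` to `(1 + d) x / (1 + d x)`; the difference of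
the two sums is `d` times the functional at `1 / (1 + d x)`. -/
theorem tendsto_weightedNodeSum_invOneAddMul (h : IsSeparated c k) (hb : ∀ j, |b j| ≤ C / k j)
    (hs : Tendsto (fun κ => ∑' j, b j * node κ (k j)) atTop (𝓝 s)) {d : ℝ≥0} (hd : 0 < d) :
    Tendsto (fun κ => weightedNodeSum h hb κ (invOneAddMul d)) atTop (𝓝 0) := by
  have hσ2 : √(1 + d : ℝ) ^ 2 = 1 + d := Real.sq_sqrt (by positivity)
  have : (0 : ℝ) < d := hd
  have hscale : Tendsto (fun κ => ∑' j, b j * node (√(1 + d) * κ) (k j)) atTop (𝓝 s) :=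
    hs.comp (tendsto_id.const_mul_atTop (by positivity))
  have hdiff := (hscale.sub hs).const_mul (1 / d : ℝ)
  rw [sub_self, mul_zero] at hdiff
  refine hdiff.congr fun κ => ?_
  rw [← (summable_mul_coe_node h hb _).tsum_sub (summable_mul_coe_node h hb κ), ← tsum_mul_left,
    weightedNodeSum_apply]
  refine tsum_congr fun j => ?_
  have hk := h.pos j
  have : (1 + d * (κ ^ 2 / (k j ^ 2 + κ ^ 2)) : ℝ) ≠ 0 := by positivity
  have : (k j ^ 2 + κ ^ 2 + d * κ ^ 2 : ℝ) ≠ 0 := by positivity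
  have : (k j ^ 2 + (1 + d) * κ ^ 2 : ℝ) ≠ 0 := by positivity
  rw [nodeWeight, invOneAddMul_apply]
  simp only [coe_node, mul_pow, hσ2]
  field_simp
  ring

theorem tendsto_weightedNodeSum (h : IsSeparated c k) (hb : ∀ j, |b j| ≤ C / k j)
    (hs : Tendsto (fun κ => ∑' j, b j * node κ (k j)) atTop (𝓝 s)) (g : C(I, ℝ)) :
    Tendsto (fun κ => weightedNodeSum h hb κ g) atTop (𝓝 0) := by
  have htop : tendstoZeroSubmodule (weightedNodeSum h hb) atTop = ⊤ :=
    eq_top_of_invOneAddMul_mem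
      (isClosed_tendstoZeroSubmodule (abs_weightedNodeSum_le h hb) atTop)
      fun d hd => tendsto_weightedNodeSum_invOneAddMul h hb hs hd
  exact htop.ge (Submodule.mem_top (x := g))

/-- The continuous functions `h` on the unit interval which vanish on `[0, 1/4]` and equal `1`
on `[1/2, 1]`. -/
structure IsCutoff (h : C(I, ℝ)) : Prop where
  eq_zero : ∀ x : I, (x : ℝ) ≤ 1 / 4 → h x = 0
  eq_one : ∀ x : I, 1 / 2 ≤ (x : ℝ) → h x = 1

theorem IsCutoff.exists_add_mul_eq {h : C(I, ℝ)} (hh : IsCutoff h) :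
    ∃ g : C(I, ℝ), ∀ x : I, (x : ℝ) + x * (1 - x) * g x = h x := by
  refine ⟨⟨fun x => h x / max (x : ℝ) (1 / 4) - (1 - h x) / max (1 - x : ℝ) (1 / 2), ?_⟩,
    fun x => ?_⟩
  · refine (h.continuous.div (by fun_prop) fun x => ?_).sub
      ((continuous_const.sub h.continuous).div (by fun_prop) fun x => ?_)
    exacts [(lt_max_of_lt_right (by norm_num)).ne', (lt_max_of_lt_right (by norm_num)).ne']
  have left : h x / max (x : ℝ) (1 / 4) * x = h x := by
    rcases le_or_gt (x : ℝ) (1 / 4) with hx | hx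
    · simp [hh.eq_zero x hx]
    · rw [max_eq_left hx.le, div_mul_cancel₀ _ (by linarith)]
  have right : (1 - h x) / max (1 - x : ℝ) (1 / 2) * (1 - x) = 1 - h x := by
    rcases le_or_gt (1 / 2) (x : ℝ) with hx | hx
    · simp [hh.eq_one x hx]
    · rw [max_eq_left (by linarith), div_mul_cancel₀ _ (by linarith)]
  simp only [ContinuousMap.coe_mk]
  linear_combination (1 - x : ℝ) * left - (x : ℝ) * right

theorem IsCutoff.summable_mul_node {g : C(I, ℝ)} (hg : IsCutoff g) (h : IsSeparated c k)
    (hb : ∀ j, |b j| ≤ C / k j) (κ : ℝ) : Summable fun j => b j * g (node κ (k j)) := by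
  obtain ⟨g', hg'⟩ := hg.exists_add_mul_eq
  refine ((summable_mul_coe_node h hb κ).add
    (summable_nodeWeight_mul h hb κ g')).congr fun j => ?_
  rw [← hg', nodeWeight]
  ring

theorem IsCutoff.tendsto_tsum {g : C(I, ℝ)} (hg : IsCutoff g) (h : IsSeparated c k)
    (hb : ∀ j, |b j| ≤ C / k j)
    (hs : Tendsto (fun κ => ∑' j, b j * node κ (k j)) atTop (𝓝 s)) :
    Tendsto (fun κ => ∑' j, b j * g (node κ (k j))) atTop (𝓝 s) := by
  obtain ⟨g', hg'⟩ := hg.exists_add_mul_eq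
  have hadd := hs.add (tendsto_weightedNodeSum h hb hs g')
  rw [add_zero] at hadd
  refine hadd.congr fun κ => ?_
  rw [weightedNodeSum_apply, ← (summable_mul_coe_node h hb κ).tsum_add
    (summable_nodeWeight_mul h hb κ g')]
  refine tsum_congr fun j => ?_
  rw [← hg', nodeWeight]
  ring

/-- The function which is `0` on `[0, 1/2 - ε]`, `1` on `[1/2, 1]` and linear in between. -/
noncomputable def ramp (ε : ℝ) : C(I, ℝ) :=
  ⟨fun x => max 0 (min 1 ((x - (1 / 2 - ε)) / ε)), by fun_prop⟩

theorem ramp_apply (ε : ℝ) (x : I) : ramp ε x = max 0 (min 1 ((x - (1 / 2 - ε)) / ε)) := rfl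

theorem ramp_nonneg (ε : ℝ) (x : I) : 0 ≤ ramp ε x := le_max_left _ _

theorem ramp_le_one (ε : ℝ) (x : I) : ramp ε x ≤ 1 := max_le zero_le_one (min_le_left _ _)

theorem ramp_eq_one {ε : ℝ} (hε : 0 < ε) {x : I} (hx : 1 / 2 ≤ (x : ℝ)) : ramp ε x = 1 := by
  rw [ramp_apply, min_eq_left, max_eq_right zero_le_one]
  rw [le_div_iff₀ hε]
  linarith

theorem ramp_eq_zero {ε : ℝ} (hε : 0 < ε) {x : I} (hx : (x : ℝ) ≤ 1 / 2 - ε) : ramp ε x = 0 := by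
  rw [ramp_apply, max_eq_left]
  exact (min_le_right _ _).trans (div_nonpos_of_nonpos_of_nonneg (by linarith) hε.le)

theorem isCutoff_ramp {ε : ℝ} (hε : 0 < ε) (hε' : ε ≤ 1 / 4) : IsCutoff (ramp ε) where
  eq_zero _ hx := ramp_eq_zero hε (by linarith)
  eq_one _ hx := ramp_eq_one hε hx

theorem half_le_node {κ t : ℝ} (ht : 0 < t) (htκ : t ≤ κ) : 1 / 2 ≤ (node κ t : ℝ) := by
  rw [coe_node, div_le_div_iff₀ two_pos (by positivity)]
  nlinarith

theorem node_le_half_sub {κ t ε : ℝ} (hκ : 0 < κ) (hε : 0 < ε) (hε' : ε ≤ 1 / 4)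
    (ht : κ * (1 + 8 * ε) ≤ t) : (node κ t : ℝ) ≤ 1 / 2 - ε := by
  have htsq : (κ * (1 + 8 * ε)) ^ 2 ≤ t ^ 2 := by gcongr
  have hone : (1 : ℝ) ≤ (1 / 2 - ε) * ((1 + 8 * ε) ^ 2 + 1) := by
    nlinarith [mul_nonneg (sq_nonneg ε) (sub_nonneg.2 hε')]
  rw [coe_node, div_le_iff₀ (by positivity)]
  calc κ ^ 2 ≤ κ ^ 2 * ((1 / 2 - ε) * ((1 + 8 * ε) ^ 2 + 1)) :=
        le_mul_of_one_le_right (sq_nonneg κ) hone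
    _ = (1 / 2 - ε) * ((κ * (1 + 8 * ε)) ^ 2 + κ ^ 2) := by ring
    _ ≤ (1 / 2 - ε) * (t ^ 2 + κ ^ 2) := by gcongr; linarith

/-- Separation leaves at most `8 ε k_N / c` frequencies in the window between `k_N` and
`(1 + 8 ε) k_N`, each carrying a coefficient of size at most `C / k_N`. -/
theorem abs_tsum_ramp_sub_sum_le (h : IsSeparated c k) (hb : ∀ j, |b j| ≤ C / k j) {ε : ℝ}
    (hε : 0 < ε) (hε' : ε ≤ 1 / 4) (N : ℕ) :
    |∑' j, b j * ramp ε (node (k N) (k j)) - ∑ j ∈ Finset.range (N + 1), b j| ≤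
      8 * C / c * ε := by
  have hc := h.gap_pos
  have hN := h.pos N
  have hC := nonneg_of_abs_le_div hN (hb N)
  have head : ∑ j ∈ Finset.range (N + 1), b j * ramp ε (node (k N) (k j)) =
      ∑ j ∈ Finset.range (N + 1), b j := by
    refine Finset.sum_congr rfl fun j hj => ?_
    rw [ramp_eq_one hε (half_le_node (h.pos j)
      (h.strictMono.monotone (Finset.mem_range_succ_iff.1 hj))), mul_one]
  have tail (j : ℕ) (hj : j ∉ Finset.range ⌊8 * ε * k N / c⌋₊) :
      b (j + (N + 1)) * ramp ε (node (k N) (k (j + (N + 1)))) = 0 := by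
    rw [Finset.mem_range, not_lt] at hj
    have hgap := h.add_mul_gap_le N (j + 1)
    have hj' := Nat.lt_of_floor_lt (Nat.lt_succ_of_le hj)
    rw [div_lt_iff₀ hc] at hj'
    rw [show N + (j + 1) = j + (N + 1) by ring] at hgap
    rw [ramp_eq_zero hε (node_le_half_sub hN hε hε' (by linarith)), mul_zero]
  have term (j : ℕ) : |b (j + (N + 1)) * ramp ε (node (k N) (k (j + (N + 1))))| ≤ C / k N := by
    rw [abs_mul, abs_of_nonneg (ramp_nonneg _ _)]
    exact (mul_le_of_le_one_right (abs_nonneg _) (ramp_le_one _ _)).trans <| (hb _).trans <| by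
      gcongr; exact h.strictMono.monotone (by lia)
  rw [← ((isCutoff_ramp hε hε').summable_mul_node h hb (k N)).sum_add_tsum_nat_add (N + 1), head,
    add_sub_cancel_left, tsum_eq_sum tail]
  calc _ ≤ ∑ _ ∈ Finset.range ⌊8 * ε * k N / c⌋₊, C / k N :=
        (Finset.abs_sum_le_sum_abs _ _).trans (Finset.sum_le_sum fun j _ => term j)
    _ = ⌊8 * ε * k N / c⌋₊ * (C / k N) := by simp
    _ ≤ 8 * ε * k N / c * (C / k N) := by gcongr; exact Nat.floor_le (by positivity)
    _ = 8 * C / c * ε := by field_simp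

/-- Karamata's method: the hypothesis controls `∑ b_j h(x_j)` for `h x = x`, hence for every
continuous `h` with `h 0 = 0` and `h 1 = 1` which is constant near the ends, hence up to `O(ε)`
for the indicator function of `[1/2, 1]`. -/
theorem tendsto_sum_of_tendsto_tsum_node (h : IsSeparated c k) (hb : ∀ j, |b j| ≤ C / k j)
    (hs : Tendsto (fun κ => ∑' j, b j * node κ (k j)) atTop (𝓝 s)) :
    Tendsto (fun N => ∑ j ∈ Finset.range N, b j) atTop (𝓝 s) := by
  have hc := h.gap_pos
  have hC := nonneg_of_abs_le_div (h.pos 0) (hb 0)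
  rw [← tendsto_add_atTop_iff_nat 1, Metric.tendsto_atTop]
  intro δ hδ
  set ε := min (1 / 4) (δ / 2 / (8 * C / c + 1))
  have hε : 0 < ε := by positivity
  have hε' : ε ≤ 1 / 4 := min_le_left _ _
  have hCε : 8 * C / c * ε < δ / 2 := by
    have : ε ≤ δ / 2 / (8 * C / c + 1) := min_le_right _ _
    rw [le_div_iff₀ (by positivity)] at this
    linarith
  obtain ⟨N₀, hN₀⟩ := Metric.tendsto_atTop.1
    (((isCutoff_ramp hε hε').tendsto_tsum h hb hs).comp h.tendsto_atTop) (δ / 2) (by positivity)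
  refine ⟨N₀, fun N hN => ?_⟩
  calc dist (∑ j ∈ Finset.range (N + 1), b j) s
      ≤ dist (∑' j, b j * ramp ε (node (k N) (k j))) (∑ j ∈ Finset.range (N + 1), b j) +
          dist (∑' j, b j * ramp ε (node (k N) (k j))) s := dist_triangle_left _ _ _
    _ < δ / 2 + δ / 2 :=
        add_lt_add ((abs_tsum_ramp_sub_sum_le h hb hε hε' N).trans_lt hCε) (hN₀ N hN)
    _ = δ := add_halves δ

end Tauberian

/-! ### Calculus on a compact interval -/

section Calculus

variable {a b : ℝ}

theorem integral_eq_sub_of_hasDerivWithinAt_Icc (hab : a ≤ b) {F F' : ℝ → ℝ}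
    (hF : ∀ x ∈ Icc a b, HasDerivWithinAt F (F' x) (Icc a b) x)
    (hF' : ContinuousOn F' (Icc a b)) : ∫ x in a..b, F' x = F b - F a :=
  intervalIntegral.integral_eq_sub_of_hasDerivAt_of_le hab
    (fun x hx => (hF x hx).continuousWithinAt)
    (fun x hx => (hF x (Ioo_subset_Icc_self hx)).hasDerivAt (Icc_mem_nhds hx.1 hx.2))
    (hF'.intervalIntegrable_of_Icc hab)

theorem abs_integral_le_mul_sub (hab : a ≤ b) {g : ℝ → ℝ} {C : ℝ}
    (hg : ∀ x ∈ Icc a b, |g x| ≤ C) : |∫ x in a..b, g x| ≤ C * (b - a) := by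
  rw [← abs_of_nonneg (sub_nonneg.2 hab)]
  exact intervalIntegral.norm_integral_le_of_norm_le_const (E := ℝ) fun x hx =>
    hg x (Ioc_subset_Icc_self (uIoc_of_le hab ▸ hx))

theorem le_exp_mul_of_deriv_le_mul {M : ℝ} {F F' : ℝ → ℝ}
    (hF : ∀ x ∈ Icc a b, HasDerivWithinAt F (F' x) (Icc a b) x)
    (hF' : ∀ x ∈ Icc a b, F' x ≤ M * F x) {x t : ℝ} (hx : x ∈ Icc a b) (ht : t ∈ Icc a b)
    (hxt : x ≤ t) : F t ≤ Real.exp (M * (t - x)) * F x := by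
  have hexp (u : ℝ) :
      HasDerivAt (fun u => Real.exp (-(M * u))) (Real.exp (-(M * u)) * -(M * 1)) u :=
    ((hasDerivAt_id u).const_mul M).neg.exp
  have hder : ∀ u ∈ Icc a b, HasDerivWithinAt (fun u => F u * Real.exp (-(M * u)))
      ((F' u - M * F u) * Real.exp (-(M * u))) (Icc a b) u := fun u hu =>
    ((hF u hu).mul (hexp u).hasDerivWithinAt).congr_deriv (by ring)
  have hanti : AntitoneOn (fun u => F u * Real.exp (-(M * u))) (Icc a b) :=
    antitoneOn_of_hasDerivWithinAt_nonpos (convex_Icc a b)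
      (fun u hu => (hder u hu).continuousWithinAt)
      (fun u hu => (hder u (interior_subset hu)).mono interior_subset)
      (fun u hu => mul_nonpos_of_nonpos_of_nonneg
        (sub_nonpos.2 (hF' u (interior_subset hu))) (Real.exp_pos _).le)
  have hmul := mul_le_mul_of_nonneg_right (hanti hx ht hxt) (Real.exp_pos (M * t)).le
  simp only [mul_assoc, ← Real.exp_add, neg_add_cancel, Real.exp_zero, mul_one] at hmul
  calc F t ≤ F x * Real.exp (-(M * x) + M * t) := hmul
    _ = Real.exp (M * (t - x)) * F x := by ring_nf

theorem le_exp_mul_of_abs_deriv_le_mul {M : ℝ} (hM : 0 ≤ M) {E E' : ℝ → ℝ}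
    (hE : ∀ x ∈ Icc a b, HasDerivWithinAt E (E' x) (Icc a b) x)
    (hE₀ : ∀ x ∈ Icc a b, 0 ≤ E x) (hE' : ∀ x ∈ Icc a b, |E' x| ≤ M * E x)
    {x t : ℝ} (hx : x ∈ Icc a b) (ht : t ∈ Icc a b) :
    E x ≤ Real.exp (M * (b - a)) * E t := by
  have hweaken {d : ℝ} (hd : d ≤ b - a) :
      Real.exp (M * d) * E t ≤ Real.exp (M * (b - a)) * E t := by
    have := hE₀ t ht
    gcongr
  rcases le_total t x with htx | hxt
  · exact (le_exp_mul_of_deriv_le_mul hE (fun u hu => (le_abs_self _).trans (hE' u hu))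
      ht hx htx).trans (hweaken (by linarith [hx.2, ht.1]))
  · have hneg := le_exp_mul_of_deriv_le_mul (M := -M) (fun u hu => (hE u hu).neg)
      (fun u hu => by
        simp only [Pi.neg_apply]
        linarith [neg_abs_le (E' u), hE' u hu]) hx ht hxt
    refine le_trans ?_ (hweaken (d := t - x) (by linarith [ht.2, hx.1]))
    rw [← div_le_iff₀' (Real.exp_pos _), div_eq_inv_mul, ← Real.exp_neg, ← neg_mul]
    simpa using hneg

theorem abs_sum_mul_sub_le_of_boundedVariationOn {s : Set ℝ} {f g : ℝ → ℝ}
    (hf : BoundedVariationOn f s) {M F : ℝ} (hg : ∀ x ∈ s, |g x| ≤ M)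
    (hF : ∀ x ∈ s, |f x| ≤ F) {p : ℕ → ℝ} (hp : Monotone p) {n : ℕ} (hps : ∀ i ≤ n, p i ∈ s) :
    |∑ i ∈ Finset.range n, f (p i) * (g (p (i + 1)) - g (p i))|
      ≤ M * (2 * F + (eVariationOn f s).toReal) := by
  have habel : ∀ m, ∑ i ∈ Finset.range m, f (p i) * (g (p (i + 1)) - g (p i))
      = f (p m) * g (p m) - f (p 0) * g (p 0)
        - ∑ i ∈ Finset.range m, (f (p (i + 1)) - f (p i)) * g (p (i + 1)) := by
    intro m
    induction m with
    | zero => simp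
    | succ m ih => rw [Finset.sum_range_succ, Finset.sum_range_succ, ih]; ring
  have hM : 0 ≤ M := (abs_nonneg _).trans (hg _ (hps 0 n.zero_le))
  have hF₀ : 0 ≤ F := (abs_nonneg _).trans (hF _ (hps 0 n.zero_le))
  have hvar : ∑ i ∈ Finset.range n, |f (p (i + 1)) - f (p i)| ≤ (eVariationOn f s).toReal := by
    have := ENNReal.toReal_mono hf
      (eVariationOn.sum_le_of_monotoneOn_Iic (f := f) (hp.monotoneOn (Iic n)) hps)
    rw [ENNReal.toReal_sum fun i _ => edist_ne_top _ _] at this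
    simpa only [← dist_edist, Real.dist_eq] using this
  have hsum : |∑ i ∈ Finset.range n, (f (p (i + 1)) - f (p i)) * g (p (i + 1))|
      ≤ M * (eVariationOn f s).toReal := by
    refine (Finset.abs_sum_le_sum_abs _ _).trans
      (le_trans ?_ (mul_le_mul_of_nonneg_left hvar hM))
    rw [Finset.mul_sum]
    refine Finset.sum_le_sum fun i hi => ?_
    rw [abs_mul, mul_comm]
    exact mul_le_mul_of_nonneg_right (hg _ (hps _ (Finset.mem_range.1 hi))) (abs_nonneg _)
  have hend : ∀ i ≤ n, |f (p i) * g (p i)| ≤ F * M := fun i hi => by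
    rw [abs_mul]
    exact mul_le_mul (hF _ (hps i hi)) (hg _ (hps i hi)) (abs_nonneg _) hF₀
  rw [habel]
  refine (abs_sub _ _).trans ?_
  linarith [abs_sub (f (p n) * g (p n)) (f (p 0) * g (p 0)), hend n le_rfl, hend 0 n.zero_le]

theorem abs_integral_mul_sub_le (hab : a ≤ b) {f g g' : ℝ → ℝ} (hf : ContinuousOn f (Icc a b))
    (hg : ∀ x ∈ Icc a b, HasDerivWithinAt g (g' x) (Icc a b) x)
    (hg' : ContinuousOn g' (Icc a b)) {G ω : ℝ} (hG : ∀ x ∈ Icc a b, |g' x| ≤ G)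
    (hω : ∀ x ∈ Icc a b, |f x - f a| ≤ ω) :
    |(∫ x in a..b, g' x * f x) - f a * (g b - g a)| ≤ G * ω * (b - a) := by
  have hint : IntervalIntegrable (fun x => g' x * f x) volume a b :=
    (hg'.mul hf).intervalIntegrable_of_Icc hab
  have hint' : IntervalIntegrable g' volume a b := hg'.intervalIntegrable_of_Icc hab
  rw [← integral_eq_sub_of_hasDerivWithinAt_Icc hab hg hg', ← intervalIntegral.integral_const_mul,
    ← intervalIntegral.integral_sub hint (hint'.const_mul _)]
  refine abs_integral_le_mul_sub hab fun x hx => ?_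
  calc |g' x * f x - f a * g' x| = |g' x| * |f x - f a| := by rw [← abs_mul]; ring_nf
    _ ≤ G * ω := mul_le_mul (hG x hx) (hω x hx) (abs_nonneg _) ((abs_nonneg _).trans (hG x hx))

theorem exists_partition_of_lt (hab : a < b) {δ : ℝ} (hδ : 0 < δ) :
    ∃ (n : ℕ) (p : ℕ → ℝ), p 0 = a ∧ p n = b ∧ Monotone p ∧ ∀ i, p (i + 1) - p i < δ := by
  obtain ⟨n, hn⟩ := exists_nat_gt ((b - a) / δ)
  have hn₀ : (0 : ℝ) < n := (div_pos (sub_pos.2 hab) hδ).trans hn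
  refine ⟨n, fun i => a + i * ((b - a) / n), by simp, by field_simp; ring, fun i j hij => ?_,
    fun i => ?_⟩
  · have := sub_pos.2 hab
    dsimp only
    gcongr
  · calc a + (i + 1 : ℕ) * ((b - a) / n) - (a + i * ((b - a) / n)) = (b - a) / n := by
          push_cast; ring
      _ < δ := by rwa [div_lt_comm₀ hn₀ hδ]

theorem exists_partition_abs_integral_sub_sum_le (hab : a < b) {f g g' : ℝ → ℝ}
    (hf : ContinuousOn f (Icc a b)) (hg : ∀ x ∈ Icc a b, HasDerivWithinAt g (g' x) (Icc a b) x)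
    (hg' : ContinuousOn g' (Icc a b)) {ε : ℝ} (hε : 0 < ε) :
    ∃ (n : ℕ) (p : ℕ → ℝ), Monotone p ∧ (∀ i ≤ n, p i ∈ Icc a b) ∧
      |(∫ x in a..b, g' x * f x)
        - ∑ i ∈ Finset.range n, f (p i) * (g (p (i + 1)) - g (p i))| ≤ ε := by
  obtain ⟨G, hG⟩ := isCompact_Icc.exists_bound_of_continuousOn hg'
  have hG₀ : 0 ≤ G := (norm_nonneg _).trans (hG a (left_mem_Icc.2 hab.le))
  have := sub_pos.2 hab
  set ω := ε / (G * (b - a) + 1)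
  obtain ⟨δ, hδ, hδf⟩ := Metric.uniformContinuousOn_iff.1
    (isCompact_Icc.uniformContinuousOn_of_continuous hf) ω (by positivity)
  obtain ⟨n, p, hp0, hpn, hp, hpδ⟩ := exists_partition_of_lt hab hδ
  have hpI : ∀ i ≤ n, p i ∈ Icc a b := fun i hi => ⟨hp0 ▸ hp i.zero_le, hpn ▸ hp hi⟩
  have hsub : ∀ i < n, Icc (p i) (p (i + 1)) ⊆ Icc a b := fun i hi =>
    Icc_subset_Icc (hpI i hi.le).1 (hpI (i + 1) hi).2
  have hpiece : ∀ i ∈ Finset.range n,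
      |(∫ x in p i..p (i + 1), g' x * f x) - f (p i) * (g (p (i + 1)) - g (p i))|
        ≤ G * ω * (p (i + 1) - p i) := fun i hi => by
    have hi := Finset.mem_range.1 hi
    refine abs_integral_mul_sub_le (hp i.le_succ) (hf.mono (hsub i hi))
      (fun x hx => (hg x (hsub i hi hx)).mono (hsub i hi)) (hg'.mono (hsub i hi))
      (fun x hx => hG x (hsub i hi hx)) fun x hx => ?_
    refine (hδf x (hsub i hi hx) (p i) (hpI i hi.le) ?_).le
    rw [Real.dist_eq, abs_of_nonneg (sub_nonneg.2 hx.1)]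
    linarith [hx.2, hpδ i]
  have hsum := intervalIntegral.sum_integral_adjacent_intervals (n := n) fun i hi =>
    ((hg'.mul hf).mono (hsub i hi)).intervalIntegrable_of_Icc (μ := volume) (hp i.le_succ)
  simp only [hp0, hpn, Pi.mul_apply] at hsum
  refine ⟨n, p, hp, hpI, ?_⟩
  rw [← hsum, ← Finset.sum_sub_distrib]
  refine (Finset.abs_sum_le_sum_abs _ _).trans ((Finset.sum_le_sum hpiece).trans ?_)
  rw [← Finset.mul_sum, Finset.sum_range_sub, hp0, hpn, mul_right_comm, mul_div_assoc',
    div_le_iff₀ (by positivity)]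
  nlinarith

theorem abs_integral_deriv_mul_le_of_boundedVariationOn (hab : a < b) {f g g' : ℝ → ℝ}
    (hf : ContinuousOn f (Icc a b)) (hbv : BoundedVariationOn f (Icc a b))
    (hg : ∀ x ∈ Icc a b, HasDerivWithinAt g (g' x) (Icc a b) x)
    (hg' : ContinuousOn g' (Icc a b)) {M F : ℝ} (hM : ∀ x ∈ Icc a b, |g x| ≤ M)
    (hF : ∀ x ∈ Icc a b, |f x| ≤ F) :
    |∫ x in a..b, g' x * f x| ≤ M * (2 * F + (eVariationOn f (Icc a b)).toReal) := by
  refine le_of_forall_pos_le_add fun ε hε => ?_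
  obtain ⟨n, p, hp, hpI, happrox⟩ := exists_partition_abs_integral_sub_sum_le hab hf hg hg' hε
  have := abs_sum_mul_sub_le_of_boundedVariationOn hbv hM hF hp hpI
  linarith [abs_sub_abs_le_abs_sub (∫ x in a..b, g' x * f x)
    (∑ i ∈ Finset.range n, f (p i) * (g (p (i + 1)) - g (p i)))]

end Calculus

/-! ### Solutions of `y'' = Q y` -/

/-- The function `y` is twice differentiable on `[a, b]` (one-sidedly at the end points), with
first derivative `y'` and second derivative `y''`. -/
structure HasSecondDerivOn (a b : ℝ) (y y' y'' : ℝ → ℝ) : Prop where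
  hasDerivWithinAt : ∀ x ∈ Icc a b, HasDerivWithinAt y (y' x) (Icc a b) x
  hasDerivWithinAt' : ∀ x ∈ Icc a b, HasDerivWithinAt y' (y'' x) (Icc a b) x

/-- The function `y`, with derivative `y'`, solves the differential equation `y'' = Q y` on
`[a, b]`. -/
abbrev IsSolutionOn (a b : ℝ) (Q y y' : ℝ → ℝ) : Prop :=
  HasSecondDerivOn a b y y' fun x => Q x * y x

/-- The separated boundary condition `u cos θ + u' sin θ = 0` on the value `u` and the slope `u'`
of a function at an end point. -/
def BoundaryCondition (θ u u' : ℝ) : Prop :=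
  u * Real.cos θ + u' * Real.sin θ = 0

section Solutions

variable {a b α β lam : ℝ} {q Q y y' y'' u u' u'' v v' v'' : ℝ → ℝ}

theorem HasSecondDerivOn.continuousOn (h : HasSecondDerivOn a b y y' y'') :
    ContinuousOn y (Icc a b) :=
  fun x hx => (h.hasDerivWithinAt x hx).continuousWithinAt

theorem HasSecondDerivOn.continuousOn' (h : HasSecondDerivOn a b y y' y'') :
    ContinuousOn y' (Icc a b) :=
  fun x hx => (h.hasDerivWithinAt' x hx).continuousWithinAt

theorem HasSecondDerivOn.congr {w'' : ℝ → ℝ} (h : HasSecondDerivOn a b y y' y'')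
    (hw : ∀ x ∈ Icc a b, y'' x = w'' x) : HasSecondDerivOn a b y y' w'' :=
  ⟨h.hasDerivWithinAt, fun x hx => hw x hx ▸ h.hasDerivWithinAt' x hx⟩

theorem isSLEigenpair_iff (hq : ContinuousOn q (Icc a b)) :
    IsSLEigenpair a b q α β lam y ↔ ∃ y', IsSolutionOn a b (fun x => q x - lam) y y' ∧
      BoundaryCondition α (y a) (y' a) ∧ BoundaryCondition β (y b) (y' b) ∧
      ∃ x ∈ Icc a b, y x ≠ 0 := by
  constructor
  · rintro ⟨y', y'', hy, hy', -, hne, heq, ha, hb⟩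
    exact ⟨y', HasSecondDerivOn.congr ⟨hy, hy'⟩ fun x hx => by linear_combination -heq x hx,
      ha, hb, hne⟩
  · rintro ⟨y', h, ha, hb, hne⟩
    exact ⟨y', fun x => (q x - lam) * y x, h.hasDerivWithinAt, h.hasDerivWithinAt',
      (hq.sub continuousOn_const).mul h.continuousOn, hne, fun x _ => by ring, ha, hb⟩

theorem HasSecondDerivOn.sub_mul (hu : HasSecondDerivOn a b u u' u'')
    (hv : HasSecondDerivOn a b v v' v'') (s : ℝ) :
    HasSecondDerivOn a b (fun x => u x - s * v x) (fun x => u' x - s * v' x)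
      fun x => u'' x - s * v'' x where
  hasDerivWithinAt x hx :=
    (hu.hasDerivWithinAt x hx).sub ((hv.hasDerivWithinAt x hx).const_mul s)
  hasDerivWithinAt' x hx :=
    (hu.hasDerivWithinAt' x hx).sub ((hv.hasDerivWithinAt' x hx).const_mul s)

theorem IsSolutionOn.wronskian_eq (hu : IsSolutionOn a b Q u u') (hv : IsSolutionOn a b Q v v')
    {x t : ℝ} (hx : x ∈ Icc a b) (ht : t ∈ Icc a b) :
    u x * v' x - u' x * v x = u t * v' t - u' t * v t := by
  have hderiv : ∀ x ∈ Icc a b,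
      HasDerivWithinAt (fun x => u x * v' x - u' x * v x) 0 (Icc a b) x := fun x hx =>
    (((hu.hasDerivWithinAt x hx).mul (hv.hasDerivWithinAt' x hx)).sub
      ((hu.hasDerivWithinAt' x hx).mul (hv.hasDerivWithinAt x hx))).congr_deriv (by ring)
  have := (convex_Icc a b).norm_image_sub_le_of_norm_hasDerivWithin_le hderiv
    (fun _ _ => norm_zero.le) ht hx
  rwa [zero_mul, norm_le_zero_iff, sub_eq_zero] at this

theorem BoundaryCondition.exists_eq_mul {θ u u' : ℝ} (h : BoundaryCondition θ u u') :
    ∃ ρ, u = ρ * Real.sin θ ∧ u' = -ρ * Real.cos θ := by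
  have h : u * Real.cos θ + u' * Real.sin θ = 0 := h
  refine ⟨u * Real.sin θ - u' * Real.cos θ, ?_, ?_⟩
  · linear_combination -u * Real.sin_sq_add_cos_sq θ + Real.cos θ * h
  · linear_combination -u' * Real.sin_sq_add_cos_sq θ + Real.sin θ * h

theorem BoundaryCondition.wronskian_eq_zero {θ u u' v v' : ℝ} (hu : BoundaryCondition θ u u')
    (hv : BoundaryCondition θ v v') : u * v' - u' * v = 0 := by
  obtain ⟨ρ, rfl, rfl⟩ := hu.exists_eq_mul
  obtain ⟨τ, rfl, rfl⟩ := hv.exists_eq_mul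
  ring

theorem integral_mul_sub_mul_eq_zero (hab : a ≤ b) (hu : HasSecondDerivOn a b u u' u'')
    (hv : HasSecondDerivOn a b v v' v'') (hu'' : ContinuousOn u'' (Icc a b))
    (hv'' : ContinuousOn v'' (Icc a b)) (hua : BoundaryCondition α (u a) (u' a))
    (hva : BoundaryCondition α (v a) (v' a)) (hub : BoundaryCondition β (u b) (u' b))
    (hvb : BoundaryCondition β (v b) (v' b)) :
    ∫ x in a..b, (u x * v'' x - u'' x * v x) = 0 := by
  rw [integral_eq_sub_of_hasDerivWithinAt_Icc hab (F := fun x => u x * v' x - u' x * v x)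
    (fun x hx => ?_) ((hu.continuousOn.fun_mul hv'').fun_sub (hu''.fun_mul hv.continuousOn)),
    hua.wronskian_eq_zero hva, hub.wronskian_eq_zero hvb, sub_zero]
  exact (((hu.hasDerivWithinAt x hx).mul (hv.hasDerivWithinAt' x hx)).sub
    ((hu.hasDerivWithinAt' x hx).mul (hv.hasDerivWithinAt x hx))).congr_deriv (by ring)

theorem integral_mul_eq_zero_of_isSLEigenpair (hab : a ≤ b) (hq : ContinuousOn q (Icc a b))
    {lam₁ lam₂ : ℝ} (hu : IsSLEigenpair a b q α β lam₁ u) (hv : IsSLEigenpair a b q α β lam₂ v)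
    (hne : lam₁ ≠ lam₂) : ∫ x in a..b, u x * v x = 0 := by
  obtain ⟨u', hu, hua, hub, -⟩ := (isSLEigenpair_iff hq).1 hu
  obtain ⟨v', hv, hva, hvb, -⟩ := (isSLEigenpair_iff hq).1 hv
  have hcont {w : ℝ → ℝ} (l : ℝ) (hw : ContinuousOn w (Icc a b)) :
      ContinuousOn (fun x => (q x - l) * w x) (Icc a b) := (hq.sub continuousOn_const).mul hw
  have h := integral_mul_sub_mul_eq_zero hab hu hv (hcont _ hu.continuousOn)
    (hcont _ hv.continuousOn) hua hva hub hvb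
  have hint : ∫ x in a..b, (u x * ((q x - lam₂) * v x) - (q x - lam₁) * u x * v x)
      = (lam₁ - lam₂) * ∫ x in a..b, u x * v x := by
    rw [← intervalIntegral.integral_const_mul]
    exact intervalIntegral.integral_congr fun x _ => by ring
  exact (mul_eq_zero.1 (hint.symm.trans h)).resolve_left (sub_ne_zero.2 hne)

theorem integral_deriv_mul_deriv (hab : a ≤ b) (hu : HasSecondDerivOn a b u u' u'')
    (hv : HasSecondDerivOn a b v v' v'') (hv'' : ContinuousOn v'' (Icc a b)) :
    ∫ x in a..b, u' x * v' x = u b * v' b - u a * v' a - ∫ x in a..b, u x * v'' x := by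
  rw [eq_sub_iff_add_eq, ← intervalIntegral.integral_add
    ((hu.continuousOn'.fun_mul hv.continuousOn').intervalIntegrable_of_Icc hab)
    ((hu.continuousOn.fun_mul hv'').intervalIntegrable_of_Icc hab)]
  exact integral_eq_sub_of_hasDerivWithinAt_Icc hab
    (fun x hx => (hu.hasDerivWithinAt x hx).mul (hv.hasDerivWithinAt' x hx))
    ((hu.continuousOn'.mul hv.continuousOn').add (hu.continuousOn.mul hv''))

end Solutions

/-! ### Phase-plane estimates -/

open scoped ComplexConjugate

/-- The phase `y + i y' / κ` of a solution of `y'' = (q - κ²) y`; for `q = 0` it rotates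
with angular velocity `-κ`. -/
noncomputable def phase (κ : ℝ) (y y' : ℝ → ℝ) (x : ℝ) : ℂ :=
  ⟨y x, y' x / κ⟩

section Phase

variable {a b α B κ κ₁ κ₂ : ℝ} {q Q y y' y₁ y₁' y₂ y₂' : ℝ → ℝ}

theorem abs_le_norm_phase (κ : ℝ) (y y' : ℝ → ℝ) (x : ℝ) : |y x| ≤ ‖phase κ y y' x‖ :=
  Complex.abs_re_le_norm (phase κ y y' x)

theorem abs_deriv_le_mul_norm_phase (hκ : 0 < κ) (y y' : ℝ → ℝ) (x : ℝ) :
    |y' x| ≤ κ * ‖phase κ y y' x‖ := by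
  have h : |y' x / κ| ≤ ‖phase κ y y' x‖ := Complex.abs_im_le_norm (phase κ y y' x)
  rwa [abs_div, abs_of_pos hκ, div_le_iff₀' hκ] at h

theorem inner_phase (κ₁ κ₂ : ℝ) (y₁ y₁' y₂ y₂' : ℝ → ℝ) (x : ℝ) :
    inner ℝ (phase κ₁ y₁ y₁' x) (phase κ₂ y₂ y₂' x)
      = y₁ x * y₂ x + (κ₁ * κ₂)⁻¹ * (y₁' x * y₂' x) := by
  rw [Complex.inner, phase, phase, Complex.mul_re, Complex.conj_re, Complex.conj_im]
  ring

theorem hasDerivWithinAt_phase (h : IsSolutionOn a b (fun x => q x - κ ^ 2) y y') (hκ : κ ≠ 0)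
    {x : ℝ} (hx : x ∈ Icc a b) :
    HasDerivWithinAt (phase κ y y')
      (Complex.I * (-κ * phase κ y y' x + (q x / κ * y x : ℝ))) (Icc a b) x := by
  have hphase : phase κ y y' = fun t => (y t : ℂ) + Complex.I * (y' t / κ : ℝ) := by
    ext t
    rw [mul_comm, ← Complex.mk_eq_add_mul_I]
    rfl
  rw [hphase]
  refine ((h.hasDerivWithinAt x hx).ofReal_comp.add
    (((h.hasDerivWithinAt' x hx).div_const κ).ofReal_comp.const_mul Complex.I)).congr_deriv ?_
  push_cast
  have : (κ : ℂ) ≠ 0 := mod_cast hκ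
  field_simp
  linear_combination (κ : ℂ) * y' x * Complex.I_sq

theorem abs_inner_add_inner_rotation_le (κ₁ κ₂ p₁ p₂ : ℝ) (w₁ w₂ : ℂ) :
    |inner ℝ w₁ (Complex.I * (-κ₂ * w₂ + p₂)) + inner ℝ (Complex.I * (-κ₁ * w₁ + p₁)) w₂|
      ≤ |κ₁ - κ₂| * (‖w₁‖ * ‖w₂‖) + (|p₁| * ‖w₂‖ + |p₂| * ‖w₁‖) := by
  have hsplit : inner ℝ w₁ (Complex.I * (-κ₂ * w₂ + p₂))
      + inner ℝ (Complex.I * (-κ₁ * w₁ + p₁)) w₂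
      = (κ₂ - κ₁) * (conj w₁ * w₂).im + (p₁ * w₂.im + p₂ * w₁.im) := by
    simp only [Complex.inner, Complex.mul_re, Complex.mul_im, Complex.conj_re, Complex.conj_im,
      Complex.add_re, Complex.add_im, Complex.neg_re, Complex.neg_im, Complex.I_re, Complex.I_im,
      Complex.ofReal_re, Complex.ofReal_im]
    ring
  have him : |(conj w₁ * w₂).im| ≤ ‖w₁‖ * ‖w₂‖ := by
    simpa using Complex.abs_im_le_norm (conj w₁ * w₂)
  rw [hsplit]
  refine (abs_add_le _ _).trans (add_le_add ?_ ((abs_add_le _ _).trans (add_le_add ?_ ?_)))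
  · rw [abs_mul, abs_sub_comm]
    gcongr
  · rw [abs_mul]
    exact mul_le_mul_of_nonneg_left (Complex.abs_im_le_norm _) (abs_nonneg _)
  · rw [abs_mul]
    exact mul_le_mul_of_nonneg_left (Complex.abs_im_le_norm _) (abs_nonneg _)

theorem exists_hasDerivWithinAt_inner_phase (h₁ : IsSolutionOn a b (fun x => q x - κ₁ ^ 2) y₁ y₁')
    (h₂ : IsSolutionOn a b (fun x => q x - κ₂ ^ 2) y₂ y₂') (hκ₁ : 0 < κ₁) (hκ₂ : 0 < κ₂)
    (hB : ∀ x ∈ Icc a b, |q x| ≤ B) :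
    ∃ G' : ℝ → ℝ, ∀ x ∈ Icc a b,
      HasDerivWithinAt (fun t => inner ℝ (phase κ₁ y₁ y₁' t) (phase κ₂ y₂ y₂' t))
        (G' x) (Icc a b) x ∧
      |G' x| ≤ (|κ₁ - κ₂| + (B / κ₁ + B / κ₂)) * (‖phase κ₁ y₁ y₁' x‖ * ‖phase κ₂ y₂ y₂' x‖) := by
  refine ⟨_, fun x hx => ⟨(hasDerivWithinAt_phase h₁ hκ₁.ne' hx).inner ℝ
    (hasDerivWithinAt_phase h₂ hκ₂.ne' hx), ?_⟩⟩
  have hpot {κ : ℝ} (hκ : 0 < κ) (y y' : ℝ → ℝ) :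
      |q x / κ * y x| ≤ B / κ * ‖phase κ y y' x‖ := by
    rw [abs_mul, abs_div, abs_of_pos hκ]
    have := (abs_nonneg _).trans (hB x hx)
    gcongr
    exacts [hB x hx, abs_le_norm_phase κ y y' x]
  refine (abs_inner_add_inner_rotation_le _ _ _ _ _ _).trans ?_
  have e₁ := mul_le_mul_of_nonneg_right (hpot hκ₁ y₁ y₁') (norm_nonneg (phase κ₂ y₂ y₂' x))
  have e₂ := mul_le_mul_of_nonneg_right (hpot hκ₂ y₂ y₂') (norm_nonneg (phase κ₁ y₁ y₁' x))
  linarith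

theorem norm_phase_le (h : IsSolutionOn a b (fun x => q x - κ ^ 2) y y')
    (hB : ∀ x ∈ Icc a b, |q x| ≤ B) (hκ : 1 ≤ κ) {x t : ℝ} (hx : x ∈ Icc a b)
    (ht : t ∈ Icc a b) :
    ‖phase κ y y' x‖ ≤ Real.exp (B * (b - a)) * ‖phase κ y y' t‖ := by
  have hB₀ : 0 ≤ B := (abs_nonneg _).trans (hB x hx)
  have hκ₀ : 0 < κ := one_pos.trans_le hκ
  obtain ⟨E', hE'⟩ := exists_hasDerivWithinAt_inner_phase h h hκ₀ hκ₀ hB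
  have hsq := le_exp_mul_of_abs_deriv_le_mul (M := 2 * B) (by positivity) (fun x hx => (hE' x hx).1)
    (fun x _ => real_inner_self_nonneg) (fun x hx => (hE' x hx).2.trans ?_) hx ht
  · rw [real_inner_self_eq_norm_sq, real_inner_self_eq_norm_sq, mul_assoc, two_mul, Real.exp_add]
      at hsq
    exact le_of_sq_le_sq (hsq.trans (by ring_nf; rfl)) (by positivity)
  · have : B / κ ≤ B := div_le_self hB₀ hκ
    rw [sub_self, abs_zero, zero_add, real_inner_self_eq_norm_mul_norm]
    gcongr
    linarith

theorem IsSolutionOn.eq_zero (h : IsSolutionOn a b Q y y') (hQ : ContinuousOn Q (Icc a b))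
    (hy : y a = 0) (hy' : y' a = 0) {x : ℝ} (hx : x ∈ Icc a b) : y x = 0 := by
  obtain ⟨B, hB⟩ := isCompact_Icc.exists_bound_of_continuousOn
    (hQ.add (continuousOn_const (c := (1 : ℝ))))
  have h₁ : IsSolutionOn a b (fun x => (Q x + 1) - 1 ^ 2) y y' := h.congr fun x _ => by ring
  have hphase := norm_phase_le h₁ hB le_rfl hx (left_mem_Icc.2 (hx.1.trans hx.2))
  have ha : phase 1 y y' a = 0 := Complex.ext hy (by simp [phase, hy'])
  rw [ha, norm_zero, mul_zero] at hphase
  exact abs_eq_zero.1 (((abs_le_norm_phase 1 y y' x).trans hphase).antisymm (abs_nonneg _))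

theorem IsSolutionOn.exists_eq_mul (h₁ : IsSolutionOn a b Q y₁ y₁') (h₂ : IsSolutionOn a b Q y₂ y₂')
    (hQ : ContinuousOn Q (Icc a b)) (hbc₁ : BoundaryCondition α (y₁ a) (y₁' a))
    (hbc₂ : BoundaryCondition α (y₂ a) (y₂' a)) (hne : ∃ x ∈ Icc a b, y₁ x ≠ 0) :
    ∃ s : ℝ, ∀ x ∈ Icc a b, y₂ x = s * y₁ x := by
  obtain ⟨ρ, hρ, hρ'⟩ := hbc₁.exists_eq_mul
  obtain ⟨τ, hτ, hτ'⟩ := hbc₂.exists_eq_mul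
  have hρ₀ : ρ ≠ 0 := by
    rintro rfl
    obtain ⟨x, hx, hx₀⟩ := hne
    exact hx₀ (h₁.eq_zero hQ (by simpa using hρ) (by simpa using hρ') hx)
  have hsub : IsSolutionOn a b Q _ _ := (h₂.sub_mul h₁ (τ / ρ)).congr fun x _ => by ring
  refine ⟨τ / ρ, fun x hx => sub_eq_zero.1 (hsub.eq_zero hQ ?_ ?_ hx)⟩
  · rw [hρ, hτ]; field_simp; ring
  · rw [hρ', hτ']; field_simp; ring

theorem continuousOn_phase (h : IsSolutionOn a b (fun x => q x - κ ^ 2) y y') (hκ : κ ≠ 0) :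
    ContinuousOn (phase κ y y') (Icc a b) :=
  fun _ hx => (hasDerivWithinAt_phase h hκ hx).continuousWithinAt

theorem integral_inner_phase (hab : a ≤ b) (hq : ContinuousOn q (Icc a b))
    (h₁ : IsSolutionOn a b (fun x => q x - κ₁ ^ 2) y₁ y₁')
    (h₂ : IsSolutionOn a b (fun x => q x - κ₂ ^ 2) y₂ y₂') (hκ₁ : κ₁ ≠ 0) (hκ₂ : κ₂ ≠ 0) :
    ∫ x in a..b, inner ℝ (phase κ₁ y₁ y₁' x) (phase κ₂ y₂ y₂' x)
      = (1 + κ₂ / κ₁) * (∫ x in a..b, y₁ x * y₂ x)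
        + (κ₁ * κ₂)⁻¹ * (y₁ b * y₂' b - y₁ a * y₂' a - ∫ x in a..b, q x * (y₁ x * y₂ x)) := by
  have hy : ContinuousOn (fun x => y₁ x * y₂ x) (Icc a b) := h₁.continuousOn.mul h₂.continuousOn
  have hy' : ContinuousOn (fun x => y₁' x * y₂' x) (Icc a b) :=
    h₁.continuousOn'.mul h₂.continuousOn'
  have hparts := integral_deriv_mul_deriv hab h₁ h₂
    ((hq.sub continuousOn_const).mul h₂.continuousOn)
  have hsplit : ∫ x in a..b, y₁ x * ((q x - κ₂ ^ 2) * y₂ x)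
      = (∫ x in a..b, q x * (y₁ x * y₂ x)) - κ₂ ^ 2 * ∫ x in a..b, y₁ x * y₂ x := by
    rw [← intervalIntegral.integral_const_mul, ← intervalIntegral.integral_sub
      ((hq.fun_mul hy).intervalIntegrable_of_Icc hab)
      ((hy.const_mul _).intervalIntegrable_of_Icc hab)]
    exact intervalIntegral.integral_congr fun x _ => by ring
  simp only [inner_phase]
  rw [intervalIntegral.integral_add (hy.intervalIntegrable_of_Icc hab)
    ((hy'.const_mul _).intervalIntegrable_of_Icc hab), intervalIntegral.integral_const_mul,
    hparts, hsplit]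
  field_simp
  ring

theorem abs_integral_inner_phase_sub_le (hab : a ≤ b) (hq : ContinuousOn q (Icc a b))
    (h₁ : IsSolutionOn a b (fun x => q x - κ₁ ^ 2) y₁ y₁')
    (h₂ : IsSolutionOn a b (fun x => q x - κ₂ ^ 2) y₂ y₂') (hκ₁ : 0 < κ₁) (hκ₂ : 1 ≤ κ₂)
    (hB : ∀ x ∈ Icc a b, |q x| ≤ B) {N : ℝ}
    (hN : ∀ x ∈ Icc a b, ‖phase κ₁ y₁ y₁' x‖ * ‖phase κ₂ y₂ y₂' x‖ ≤ N) :
    |(∫ x in a..b, inner ℝ (phase κ₁ y₁ y₁' x) (phase κ₂ y₂ y₂' x))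
      - (1 + κ₂ / κ₁) * ∫ x in a..b, y₁ x * y₂ x| ≤ (2 + B * (b - a)) * N / κ₁ := by
  have ha := left_mem_Icc.2 hab
  have hB₀ : 0 ≤ B := (abs_nonneg _).trans (hB a ha)
  have hN₀ : 0 ≤ N := (mul_nonneg (norm_nonneg _) (norm_nonneg _)).trans (hN a ha)
  have hba : 0 ≤ b - a := sub_nonneg.2 hab
  have hκ₂₀ : 0 < κ₂ := one_pos.trans_le hκ₂
  have hbdry : ∀ x ∈ Icc a b, |y₁ x * y₂' x| ≤ κ₂ * N := fun x hx => by
    rw [abs_mul]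
    calc |y₁ x| * |y₂' x| ≤ ‖phase κ₁ y₁ y₁' x‖ * (κ₂ * ‖phase κ₂ y₂ y₂' x‖) :=
          mul_le_mul (abs_le_norm_phase _ _ _ _) (abs_deriv_le_mul_norm_phase hκ₂₀ _ _ _)
            (abs_nonneg _) (norm_nonneg _)
      _ = κ₂ * (‖phase κ₁ y₁ y₁' x‖ * ‖phase κ₂ y₂ y₂' x‖) := by ring
      _ ≤ κ₂ * N := mul_le_mul_of_nonneg_left (hN x hx) hκ₂₀.le
  have hpot : |∫ x in a..b, q x * (y₁ x * y₂ x)| ≤ B * N * (b - a) :=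
    abs_integral_le_mul_sub hab fun x hx => by
      rw [abs_mul, abs_mul]
      refine mul_le_mul (hB x hx) (le_trans ?_ (hN x hx)) (mul_nonneg (abs_nonneg _) (abs_nonneg _))
        hB₀
      exact mul_le_mul (abs_le_norm_phase _ _ _ _) (abs_le_norm_phase _ _ _ _)
        (abs_nonneg _) (norm_nonneg _)
  rw [integral_inner_phase hab hq h₁ h₂ hκ₁.ne' hκ₂₀.ne', add_sub_cancel_left, abs_mul,
    abs_of_pos (by positivity : 0 < (κ₁ * κ₂)⁻¹), inv_mul_le_iff₀ (by positivity)]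
  calc |y₁ b * y₂' b - y₁ a * y₂' a - ∫ x in a..b, q x * (y₁ x * y₂ x)|
      ≤ κ₂ * N + κ₂ * N + B * N * (b - a) := (abs_sub _ _).trans (add_le_add
        ((abs_sub _ _).trans (add_le_add (hbdry b (right_mem_Icc.2 hab)) (hbdry a ha))) hpot)
    _ ≤ κ₂ * N + κ₂ * N + κ₂ * (B * N * (b - a)) := add_le_add_right
        (le_mul_of_one_le_left (mul_nonneg (mul_nonneg hB₀ hN₀) hba) hκ₂) _
    _ = κ₁ * κ₂ * ((2 + B * (b - a)) * N / κ₁) := by field_simp; ring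

theorem sub_mul_sq_norm_phase_le (hab : a ≤ b)
    (h : IsSolutionOn a b (fun x => q x - κ ^ 2) y y') (hB : ∀ x ∈ Icc a b, |q x| ≤ B)
    (hκ : 1 ≤ κ) {x : ℝ} (hx : x ∈ Icc a b) :
    (b - a) * ‖phase κ y y' x‖ ^ 2
      ≤ Real.exp (B * (b - a)) ^ 2 * ∫ t in a..b, ‖phase κ y y' t‖ ^ 2 := by
  have hcont := (continuousOn_phase h (one_pos.trans_le hκ).ne').norm.pow 2
  rw [← intervalIntegral.integral_const_mul, ← smul_eq_mul, ← intervalIntegral.integral_const]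
  refine intervalIntegral.integral_mono_on hab intervalIntegrable_const
    ((hcont.const_mul _).intervalIntegrable_of_Icc hab) fun t ht => ?_
  rw [← mul_pow]
  gcongr
  exact norm_phase_le h hB hκ hx ht

theorem sq_norm_phase_le_integral_sq (hab : a < b) (hq : ContinuousOn q (Icc a b))
    (h : IsSolutionOn a b (fun x => q x - κ ^ 2) y y') (hB : ∀ x ∈ Icc a b, |q x| ≤ B)
    (hκ : 1 ≤ κ) (hκB : 2 * Real.exp (B * (b - a)) ^ 2 * (2 + B * (b - a)) / (b - a) ≤ κ)
    {x : ℝ} (hx : x ∈ Icc a b) :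
    ‖phase κ y y' x‖ ^ 2 ≤ 4 * Real.exp (B * (b - a)) ^ 2 / (b - a) * ∫ t in a..b, y t ^ 2 := by
  have hba : 0 < b - a := sub_pos.2 hab
  have hκ₀ : 0 < κ := one_pos.trans_le hκ
  set P := Real.exp (B * (b - a))
  set J := ∫ t in a..b, ‖phase κ y y' t‖ ^ 2 with hJ
  have hN : ∀ t ∈ Icc a b, ‖phase κ y y' t‖ ^ 2 ≤ P ^ 2 * J / (b - a) := fun t ht => by
    rw [le_div_iff₀' hba]
    exact sub_mul_sq_norm_phase_le hab.le h hB hκ ht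
  have hparts := abs_integral_inner_phase_sub_le hab.le hq h h hκ₀ hκ hB
    fun t ht => by simpa only [sq] using hN t ht
  simp only [real_inner_self_eq_norm_sq, ← hJ, ← sq, div_self hκ₀.ne', one_add_one_eq_two]
    at hparts
  have hJ₀ : 0 ≤ J := intervalIntegral.integral_nonneg hab.le fun t _ => by positivity
  have hsmall : (2 + B * (b - a)) * (P ^ 2 * J / (b - a)) / κ ≤ J / 2 := by
    rw [div_le_iff₀ hκ₀]
    calc (2 + B * (b - a)) * (P ^ 2 * J / (b - a))
        = J / 2 * (2 * P ^ 2 * (2 + B * (b - a)) / (b - a)) := by ring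
      _ ≤ J / 2 * κ := by gcongr
  have hJ_le : J ≤ 4 * ∫ t in a..b, y t ^ 2 := by
    linarith [le_abs_self (J - 2 * ∫ t in a..b, y t ^ 2)]
  calc ‖phase κ y y' x‖ ^ 2 ≤ P ^ 2 * J / (b - a) := hN x hx
    _ ≤ P ^ 2 * (4 * ∫ t in a..b, y t ^ 2) / (b - a) := by gcongr
    _ = 4 * P ^ 2 / (b - a) * ∫ t in a..b, y t ^ 2 := by ring

/-- The condition on `κ` reads `|cos α| ≤ κ |sin α|` unless `sin α = 0`, where `Real.cot α = 0`
and there is nothing to require: both phases are then purely imaginary. -/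
theorem norm_phase_mul_norm_phase_le_of_boundaryCondition
    (h₁ : BoundaryCondition α (y₁ a) (y₁' a)) (h₂ : BoundaryCondition α (y₂ a) (y₂' a))
    (hκ₁₀ : 0 < κ₁) (hκ₂₀ : 0 < κ₂) (hκ₁ : |Real.cot α| ≤ κ₁) (hκ₂ : |Real.cot α| ≤ κ₂) :
    ‖phase κ₁ y₁ y₁' a‖ * ‖phase κ₂ y₂ y₂' a‖
      ≤ 2 * |inner ℝ (phase κ₁ y₁ y₁' a) (phase κ₂ y₂ y₂' a)| := by
  obtain ⟨ρ₁, hρ₁, hρ₁'⟩ := h₁.exists_eq_mul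
  obtain ⟨ρ₂, hρ₂, hρ₂'⟩ := h₂.exists_eq_mul
  have hnorm {κ ρ : ℝ} {y y' : ℝ → ℝ} (hy : y a = ρ * Real.sin α) (hy' : y' a = -ρ * Real.cos α) :
      ‖phase κ y y' a‖ ^ 2 = ρ ^ 2 * (Real.sin α ^ 2 + (Real.cos α / κ) ^ 2) := by
    rw [← real_inner_self_eq_norm_sq, inner_phase, hy, hy']
    ring
  have hpos : 0 ≤ Real.cos α / κ₁ * (Real.cos α / κ₂) := by
    rw [div_mul_div_comm]
    exact div_nonneg (mul_self_nonneg _) (mul_pos hκ₁₀ hκ₂₀).le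
  have hcos {κ : ℝ} (hκ₀ : 0 < κ) (hκ : |Real.cot α| ≤ κ) (hsin : Real.sin α ≠ 0) :
      (Real.cos α / κ) ^ 2 ≤ Real.sin α ^ 2 := by
    rw [Real.cot_eq_cos_div_sin, abs_div, div_le_iff₀ (abs_pos.2 hsin)] at hκ
    rwa [sq_le_sq, abs_div, abs_of_pos hκ₀, div_le_iff₀' hκ₀]
  refine le_of_sq_le_sq ?_ (by positivity)
  rw [inner_phase, hρ₁, hρ₁', hρ₂, hρ₂', mul_pow, mul_pow, sq_abs, hnorm hρ₁ hρ₁', hnorm hρ₂ hρ₂']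
  set u := Real.cos α / κ₁ with hu
  set v := Real.cos α / κ₂ with hv
  have hscalar : (Real.sin α ^ 2 + u ^ 2) * (Real.sin α ^ 2 + v ^ 2)
      ≤ 4 * (Real.sin α ^ 2 + u * v) ^ 2 := by
    by_cases hsin : Real.sin α = 0
    · rw [hsin]
      nlinarith [sq_nonneg (u * v)]
    · nlinarith [hcos hκ₁₀ hκ₁ hsin, hcos hκ₂₀ hκ₂ hsin, sq_nonneg (Real.sin α), sq_nonneg u,
        mul_nonneg (sq_nonneg (Real.sin α)) hpos]
  calc ρ₁ ^ 2 * (Real.sin α ^ 2 + u ^ 2) * (ρ₂ ^ 2 * (Real.sin α ^ 2 + v ^ 2))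
      = (ρ₁ * ρ₂) ^ 2 * ((Real.sin α ^ 2 + u ^ 2) * (Real.sin α ^ 2 + v ^ 2)) := by ring
    _ ≤ (ρ₁ * ρ₂) ^ 2 * (4 * (Real.sin α ^ 2 + u * v) ^ 2) := by gcongr
    _ = _ := by
        rw [hu, hv]
        ring

theorem abs_integral_inner_phase_sub_initial_le (hab : a ≤ b)
    (h₁ : IsSolutionOn a b (fun x => q x - κ₁ ^ 2) y₁ y₁')
    (h₂ : IsSolutionOn a b (fun x => q x - κ₂ ^ 2) y₂ y₂') (hκ₁ : 0 < κ₁) (hκ₂ : 0 < κ₂)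
    (hB : ∀ x ∈ Icc a b, |q x| ≤ B) {N : ℝ}
    (hN : ∀ x ∈ Icc a b, ‖phase κ₁ y₁ y₁' x‖ * ‖phase κ₂ y₂ y₂' x‖ ≤ N) :
    |(∫ x in a..b, inner ℝ (phase κ₁ y₁ y₁' x) (phase κ₂ y₂ y₂' x))
      - (b - a) * inner ℝ (phase κ₁ y₁ y₁' a) (phase κ₂ y₂ y₂' a)|
      ≤ (|κ₁ - κ₂| + (B / κ₁ + B / κ₂)) * N * (b - a) * (b - a) := by
  have ha := left_mem_Icc.2 hab
  obtain ⟨G', hG'⟩ := exists_hasDerivWithinAt_inner_phase h₁ h₂ hκ₁ hκ₂ hB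
  set G := fun x => inner ℝ (phase κ₁ y₁ y₁' x) (phase κ₂ y₂ y₂' x)
  set L := (|κ₁ - κ₂| + (B / κ₁ + B / κ₂)) * N
  have hB₀ : 0 ≤ B := (abs_nonneg _).trans (hB a ha)
  have hL : ∀ x ∈ Icc a b, |G' x| ≤ L := fun x hx => (hG' x hx).2.trans
    (mul_le_mul_of_nonneg_left (hN x hx) (by positivity))
  have hvar : ∀ x ∈ Icc a b, |G x - G a| ≤ L * (b - a) := fun x hx => by
    refine ((convex_Icc a b).norm_image_sub_le_of_norm_hasDerivWithin_le
      (fun t ht => (hG' t ht).1) hL ha hx).trans ?_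
    rw [Real.norm_of_nonneg (sub_nonneg.2 hx.1)]
    have := (abs_nonneg _).trans (hL a ha)
    gcongr
    exact hx.2
  have hG : ContinuousOn G (Icc a b) := fun x hx => (hG' x hx).1.continuousWithinAt
  rw [← smul_eq_mul (b - a), ← intervalIntegral.integral_const, ← intervalIntegral.integral_sub
    (hG.intervalIntegrable_of_Icc hab) intervalIntegrable_const]
  exact abs_integral_le_mul_sub hab hvar

theorem norm_phase_pos (h : IsSolutionOn a b (fun x => q x - κ ^ 2) y y')
    (hB : ∀ x ∈ Icc a b, |q x| ≤ B) (hκ : 1 ≤ κ) (hne : ∃ x ∈ Icc a b, y x ≠ 0) {t : ℝ}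
    (ht : t ∈ Icc a b) : 0 < ‖phase κ y y' t‖ := by
  obtain ⟨x, hx, hx₀⟩ := hne
  have : 0 < Real.exp (B * (b - a)) * ‖phase κ y y' t‖ := (abs_pos.2 hx₀).trans_le
    ((abs_le_norm_phase κ y y' x).trans (norm_phase_le h hB hκ hx ht))
  exact pos_of_mul_pos_right this (Real.exp_pos _).le

theorem norm_phase_mul_norm_phase_le (h₁ : IsSolutionOn a b (fun x => q x - κ₁ ^ 2) y₁ y₁')
    (h₂ : IsSolutionOn a b (fun x => q x - κ₂ ^ 2) y₂ y₂') (hB : ∀ x ∈ Icc a b, |q x| ≤ B)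
    (hκ₁ : 1 ≤ κ₁) (hκ₂ : 1 ≤ κ₂) {x t : ℝ} (hx : x ∈ Icc a b) (ht : t ∈ Icc a b) :
    ‖phase κ₁ y₁ y₁' x‖ * ‖phase κ₂ y₂ y₂' x‖
      ≤ Real.exp (B * (b - a)) ^ 2 * (‖phase κ₁ y₁ y₁' t‖ * ‖phase κ₂ y₂ y₂' t‖) :=
  (mul_le_mul (norm_phase_le h₁ hB hκ₁ hx ht) (norm_phase_le h₂ hB hκ₂ hx ht) (norm_nonneg _)
    (by positivity)).trans_eq (by ring)

/-- The mean of the inner product of the two phases is small by orthogonality, while its initial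
value is comparable to the product of the norms; so it has to vary, which bounds `|κ₁ - κ₂|` from
below. -/
theorem half_mul_norm_phase_le_of_integral_mul_eq_zero (hab : a < b) (hq : ContinuousOn q (Icc a b))
    (h₁ : IsSolutionOn a b (fun x => q x - κ₁ ^ 2) y₁ y₁')
    (h₂ : IsSolutionOn a b (fun x => q x - κ₂ ^ 2) y₂ y₂')
    (hbc₁ : BoundaryCondition α (y₁ a) (y₁' a)) (hbc₂ : BoundaryCondition α (y₂ a) (y₂' a))
    (horth : ∫ x in a..b, y₁ x * y₂ x = 0) (hB : ∀ x ∈ Icc a b, |q x| ≤ B) {K : ℝ} (hK : 1 ≤ K)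
    (hKα : |Real.cot α| ≤ K) (hκ₁ : K ≤ κ₁) (hκ₂ : K ≤ κ₂) :
    (b - a) / 2 * (‖phase κ₁ y₁ y₁' a‖ * ‖phase κ₂ y₂ y₂' a‖)
      ≤ (Real.exp (B * (b - a)) ^ 2 * (2 + B * (b - a) + 2 * B * (b - a) ^ 2) / K
          + |κ₁ - κ₂| * Real.exp (B * (b - a)) ^ 2 * (b - a) ^ 2)
        * (‖phase κ₁ y₁ y₁' a‖ * ‖phase κ₂ y₂ y₂' a‖) := by
  have hl : 0 < b - a := sub_pos.2 hab
  have hK₀ : 0 < K := one_pos.trans_le hK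
  have ha := left_mem_Icc.2 hab.le
  have hB₀ : 0 ≤ B := (abs_nonneg _).trans (hB a ha)
  have hN x (hx : x ∈ Icc a b) :=
    norm_phase_mul_norm_phase_le h₁ h₂ hB (hK.trans hκ₁) (hK.trans hκ₂) hx ha
  have hinit := norm_phase_mul_norm_phase_le_of_boundaryCondition hbc₁ hbc₂
    (hK₀.trans_le hκ₁) (hK₀.trans_le hκ₂) (hKα.trans hκ₁) (hKα.trans hκ₂)
  have hvar := abs_integral_inner_phase_sub_initial_le hab.le h₁ h₂ (hK₀.trans_le hκ₁)
    (hK₀.trans_le hκ₂) hB hN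
  have hint := abs_integral_inner_phase_sub_le hab.le hq h₁ h₂ (hK₀.trans_le hκ₁)
    (hK.trans hκ₂) hB hN
  rw [horth, mul_zero, sub_zero] at hint
  set P := Real.exp (B * (b - a))
  set e := ‖phase κ₁ y₁ y₁' a‖ * ‖phase κ₂ y₂ y₂' a‖
  set G := inner ℝ (phase κ₁ y₁ y₁' a) (phase κ₂ y₂ y₂' a)
  set J := ∫ x in a..b, inner ℝ (phase κ₁ y₁ y₁' x) (phase κ₂ y₂ y₂' x)
  calc (b - a) / 2 * e ≤ (b - a) * |G| := by nlinarith
    _ = |J - (J - (b - a) * G)| := by rw [sub_sub_cancel, abs_mul, abs_of_pos hl]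
    _ ≤ |J| + |J - (b - a) * G| := abs_sub _ _
    _ ≤ (2 + B * (b - a)) * (P ^ 2 * e) / K
        + (|κ₁ - κ₂| + (B / K + B / K)) * (P ^ 2 * e) * (b - a) * (b - a) :=
      add_le_add (hint.trans (by gcongr)) (hvar.trans (by gcongr))
    _ = _ := by ring

theorem inv_le_abs_sub_of_integral_mul_eq_zero (hab : a < b) (hq : ContinuousOn q (Icc a b))
    (h₁ : IsSolutionOn a b (fun x => q x - κ₁ ^ 2) y₁ y₁')
    (h₂ : IsSolutionOn a b (fun x => q x - κ₂ ^ 2) y₂ y₂')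
    (hbc₁ : BoundaryCondition α (y₁ a) (y₁' a)) (hbc₂ : BoundaryCondition α (y₂ a) (y₂' a))
    (hne₁ : ∃ x ∈ Icc a b, y₁ x ≠ 0) (hne₂ : ∃ x ∈ Icc a b, y₂ x ≠ 0)
    (horth : ∫ x in a..b, y₁ x * y₂ x = 0) (hB : ∀ x ∈ Icc a b, |q x| ≤ B) {K : ℝ} (hK : 1 ≤ K)
    (hKα : |Real.cot α| ≤ K)
    (hKB : 4 * Real.exp (B * (b - a)) ^ 2 * (2 + B * (b - a) + 2 * B * (b - a) ^ 2) / (b - a) ≤ K)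
    (hκ₁ : K ≤ κ₁) (hκ₂ : K ≤ κ₂) :
    (4 * (b - a) * Real.exp (B * (b - a)) ^ 2)⁻¹ ≤ |κ₁ - κ₂| := by
  have hl : 0 < b - a := sub_pos.2 hab
  have ha := left_mem_Icc.2 hab.le
  have hpos : 0 < ‖phase κ₁ y₁ y₁' a‖ * ‖phase κ₂ y₂ y₂' a‖ :=
    mul_pos (norm_phase_pos h₁ hB (hK.trans hκ₁) hne₁ ha)
      (norm_phase_pos h₂ hB (hK.trans hκ₂) hne₂ ha)
  have hhalf := le_of_mul_le_mul_right (half_mul_norm_phase_le_of_integral_mul_eq_zero hab hq h₁ h₂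
    hbc₁ hbc₂ horth hB hK hKα hκ₁ hκ₂) hpos
  set P := Real.exp (B * (b - a))
  have hquarter : P ^ 2 * (2 + B * (b - a) + 2 * B * (b - a) ^ 2) / K ≤ (b - a) / 4 := by
    rw [div_le_iff₀ hl] at hKB
    rw [div_le_iff₀ (one_pos.trans_le hK)]
    linarith
  rw [inv_le_iff_one_le_mul₀ (by positivity)]
  refine le_of_mul_le_mul_left ?_ (by positivity : 0 < (b - a) / 4)
  linarith

theorem abs_integral_mul_le_div (hab : a < b) (hq : ContinuousOn q (Icc a b))
    (h : IsSolutionOn a b (fun x => q x - κ ^ 2) y y') (hB : ∀ x ∈ Icc a b, |q x| ≤ B)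
    (hκ : 1 ≤ κ) {D : ℝ} (hD : ∀ x ∈ Icc a b, ‖phase κ y y' x‖ ≤ D) {f : ℝ → ℝ} {F : ℝ}
    (hf : ContinuousOn f (Icc a b)) (hbv : BoundedVariationOn f (Icc a b))
    (hF : ∀ x ∈ Icc a b, |f x| ≤ F) :
    |∫ x in a..b, y x * f x|
      ≤ D * (B * F * (b - a) + (2 * F + (eVariationOn f (Icc a b)).toReal)) / κ := by
  have hκ₀ : 0 < κ := one_pos.trans_le hκ
  have ha := left_mem_Icc.2 hab.le
  have hD₀ : 0 ≤ D := (norm_nonneg _).trans (hD a ha)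
  have hB₀ : 0 ≤ B := (abs_nonneg _).trans (hB a ha)
  have hF₀ : 0 ≤ F := (abs_nonneg _).trans (hF a ha)
  have hyf : ContinuousOn (fun x => y x * f x) (Icc a b) := h.continuousOn.mul hf
  have hq_le : |∫ x in a..b, q x * (y x * f x)| ≤ B * (D * F) * (b - a) :=
    abs_integral_le_mul_sub hab.le fun x hx => by
      rw [abs_mul, abs_mul]
      gcongr
      exacts [hB x hx, (abs_le_norm_phase _ _ _ _).trans (hD x hx), hF x hx]
  have hbv_le := abs_integral_deriv_mul_le_of_boundedVariationOn hab hf hbv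
    h.hasDerivWithinAt' ((hq.sub continuousOn_const).mul h.continuousOn)
    (fun x hx => (abs_deriv_le_mul_norm_phase hκ₀ y y' x).trans
      (mul_le_mul_of_nonneg_left (hD x hx) hκ₀.le)) hF
  have hsplit : ∫ x in a..b, (q x - κ ^ 2) * y x * f x
      = (∫ x in a..b, q x * (y x * f x)) - κ ^ 2 * ∫ x in a..b, y x * f x := by
    rw [← intervalIntegral.integral_const_mul, ← intervalIntegral.integral_sub
      ((hq.fun_mul hyf).intervalIntegrable_of_Icc hab.le)
      ((hyf.const_mul _).intervalIntegrable_of_Icc hab.le)]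
    exact intervalIntegral.integral_congr fun x _ => by ring
  set V := 2 * F + (eVariationOn f (Icc a b)).toReal
  refine le_of_mul_le_mul_left ?_ (pow_pos hκ₀ 2)
  calc κ ^ 2 * |∫ x in a..b, y x * f x|
      = |(∫ x in a..b, q x * (y x * f x)) - ∫ x in a..b, (q x - κ ^ 2) * y x * f x| := by
        rw [hsplit, sub_sub_cancel, abs_mul, abs_of_pos (pow_pos hκ₀ 2)]
    _ ≤ B * (D * F) * (b - a) + κ * D * V := (abs_sub _ _).trans (add_le_add hq_le hbv_le)
    _ ≤ κ * (B * (D * F) * (b - a)) + κ * D * V := add_le_add_left (le_mul_of_one_le_left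
        (mul_nonneg (by positivity) (sub_nonneg.2 hab.le)) hκ) _
    _ = κ ^ 2 * (D * (B * F * (b - a) + V) / κ) := by field_simp

theorem exists_abs_integral_mul_mul_le_div (hab : a < b) (hq : ContinuousOn q (Icc a b))
    {f : ℝ → ℝ} (hf : ContinuousOn f (Icc a b)) (hbv : BoundedVariationOn f (Icc a b)) :
    ∃ C K : ℝ, ∀ (κ : ℝ) (y y' : ℝ → ℝ), K ≤ κ → IsSolutionOn a b (fun x => q x - κ ^ 2) y y' →
      ∫ x in a..b, y x ^ 2 = 1 → ∀ x ∈ Icc a b, |(∫ t in a..b, y t * f t) * y x| ≤ C / κ := by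
  obtain ⟨B, hB⟩ := isCompact_Icc.exists_bound_of_continuousOn hq
  obtain ⟨F, hF⟩ := isCompact_Icc.exists_bound_of_continuousOn hf
  set P := Real.exp (B * (b - a))
  set D := √(4 * P ^ 2 / (b - a))
  set V := 2 * F + (eVariationOn f (Icc a b)).toReal
  refine ⟨D * (B * F * (b - a) + V) * D, max 1 (2 * P ^ 2 * (2 + B * (b - a)) / (b - a)),
    fun κ y y' hκ h hnorm x hx => ?_⟩
  have hD : ∀ t ∈ Icc a b, ‖phase κ y y' t‖ ≤ D := fun t ht => Real.le_sqrt_of_sq_le <| by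
    simpa only [hnorm, mul_one] using
      sq_norm_phase_le_integral_sq hab hq h hB (le_of_max_le_left hκ) (le_of_max_le_right hκ) ht
  have hcoef := abs_integral_mul_le_div hab hq h hB (le_of_max_le_left hκ) hD hf hbv hF
  rw [abs_mul, mul_div_right_comm]
  exact mul_le_mul hcoef ((abs_le_norm_phase κ y y' x).trans (hD x hx)) (abs_nonneg _)
    ((abs_nonneg _).trans hcoef)

end Phase

/-! ### Green functions -/

/-- The Green function of `u ↦ Q u - u''` built from solutions `φ` and `χ` of `u'' = Q u` that
satisfy the boundary condition at the left and the right end point and have Wronskian `W`. -/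
noncomputable def greenFunction (W : ℝ) (φ χ : ℝ → ℝ) (x t : ℝ) : ℝ :=
  φ (min x t) * χ (max x t) / W

/-- Variation of constants: for `(ψ, ω) = (φ, χ)` the solution of `Q u - u'' = g` given by the
Green function, and for `(ψ, ω) = (φ', χ')` its derivative. -/
noncomputable def greenSolution (a b W : ℝ) (φ χ ψ ω g : ℝ → ℝ) (x : ℝ) : ℝ :=
  (ω x * (∫ t in a..x, φ t * g t) - ψ x * (∫ t in b..x, χ t * g t)) / W

/-- The data of a Green function of `u ↦ Q u - u''` with separated boundary conditions: a solution
`φ` of the homogeneous equation satisfying the condition at `a`, a solution `χ` satisfying the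
condition at `b`, and their nonvanishing Wronskian `W`. -/
structure IsGreenPair (a b α β : ℝ) (Q : ℝ → ℝ) (W : ℝ) (φ φ' χ χ' : ℝ → ℝ) : Prop where
  left : IsSolutionOn a b Q φ φ'
  right : IsSolutionOn a b Q χ χ'
  boundaryCondition_left : BoundaryCondition α (φ a) (φ' a)
  boundaryCondition_right : BoundaryCondition β (χ b) (χ' b)
  wronskian_left : φ' a * χ a - φ a * χ' a = W
  wronskian_ne_zero : W ≠ 0

theorem hasDerivWithinAt_integral_Icc {a b c x : ℝ} {g : ℝ → ℝ} (hg : ContinuousOn g (Icc a b))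
    (hc : c ∈ Icc a b) (hx : x ∈ Icc a b) :
    HasDerivWithinAt (fun u => ∫ t in c..u, g t) (g x) (Icc a b) x := by
  have : Fact (x ∈ Icc a b) := ⟨hx⟩
  exact intervalIntegral.integral_hasDerivWithinAt_right
    ((hg.mono (uIcc_subset_Icc hc hx)).intervalIntegrable)
    (hg.stronglyMeasurableAtFilter_nhdsWithin measurableSet_Icc x) (hg x hx)

namespace IsGreenPair

variable {a b α β W : ℝ} {Q φ φ' χ χ' g h u u' : ℝ → ℝ}

theorem wronskian (hG : IsGreenPair a b α β Q W φ φ' χ χ') {x : ℝ} (hx : x ∈ Icc a b) :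
    φ' x * χ x - φ x * χ' x = W := by
  linear_combination hG.wronskian_left
    - hG.left.wronskian_eq hG.right hx (left_mem_Icc.2 (hx.1.trans hx.2))

theorem continuousOn_greenFunction (hG : IsGreenPair a b α β Q W φ φ' χ χ') :
    ContinuousOn (fun p : ℝ × ℝ => greenFunction W φ χ p.1 p.2) (Icc a b ×ˢ Icc a b) :=
  ((hG.left.continuousOn.comp (by fun_prop) fun _ hp =>
    ⟨le_min hp.1.1 hp.2.1, min_le_of_left_le hp.1.2⟩).mul
    (hG.right.continuousOn.comp (by fun_prop) fun _ hp =>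
      ⟨le_max_of_le_left hp.1.1, max_le hp.1.2 hp.2.2⟩)).div_const W

theorem continuousOn_greenFunction_right (hG : IsGreenPair a b α β Q W φ φ' χ χ') {x : ℝ}
    (hx : x ∈ Icc a b) : ContinuousOn (greenFunction W φ χ x) (Icc a b) :=
  hG.continuousOn_greenFunction.comp (f := fun t => (x, t)) (by fun_prop) fun _ ht => ⟨hx, ht⟩

theorem integral_greenFunction_mul (hG : IsGreenPair a b α β Q W φ φ' χ χ')
    (hg : ContinuousOn g (Icc a b)) {x : ℝ} (hx : x ∈ Icc a b) :
    ∫ t in a..b, greenFunction W φ χ x t * g t = greenSolution a b W φ χ φ χ g x := by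
  have hcont := (hG.continuousOn_greenFunction_right hx).fun_mul hg
  have hint {c d : ℝ} (hc : c ∈ Icc a b) (hd : d ∈ Icc a b) :=
    (hcont.mono (uIcc_subset_Icc hc hd)).intervalIntegrable (μ := volume)
  have hab := hx.1.trans hx.2
  have hleft : ∫ t in a..x, greenFunction W φ χ x t * g t
      = χ x / W * ∫ t in a..x, φ t * g t := by
    rw [← intervalIntegral.integral_const_mul]
    refine intervalIntegral.integral_congr fun t ht => ?_
    rw [uIcc_of_le hx.1] at ht
    simp only [greenFunction, min_eq_right ht.2, max_eq_left ht.2]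
    ring
  have hright : ∫ t in x..b, greenFunction W φ χ x t * g t
      = φ x / W * ∫ t in x..b, χ t * g t := by
    rw [← intervalIntegral.integral_const_mul]
    refine intervalIntegral.integral_congr fun t ht => ?_
    rw [uIcc_of_le hx.2] at ht
    simp only [greenFunction, min_eq_left ht.1, max_eq_right ht.1]
    ring
  rw [greenSolution, ← intervalIntegral.integral_add_adjacent_intervals
    (hint (left_mem_Icc.2 hab) hx) (hint hx (right_mem_Icc.2 hab)), hleft, hright,
    intervalIntegral.integral_symm x b]
  ring

theorem hasSecondDerivOn_greenSolution (hG : IsGreenPair a b α β Q W φ φ' χ χ')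
    (hg : ContinuousOn g (Icc a b)) :
    HasSecondDerivOn a b (greenSolution a b W φ χ φ χ g) (greenSolution a b W φ χ φ' χ' g)
      fun x => Q x * greenSolution a b W φ χ φ χ g x - g x := by
  have hφ {x : ℝ} (hx : x ∈ Icc a b) := hasDerivWithinAt_integral_Icc
    (hG.left.continuousOn.fun_mul hg) (left_mem_Icc.2 (hx.1.trans hx.2)) hx
  have hχ {x : ℝ} (hx : x ∈ Icc a b) := hasDerivWithinAt_integral_Icc
    (hG.right.continuousOn.fun_mul hg) (right_mem_Icc.2 (hx.1.trans hx.2)) hx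
  refine ⟨fun x hx => ((((hG.right.hasDerivWithinAt x hx).mul (hφ hx)).sub
    ((hG.left.hasDerivWithinAt x hx).mul (hχ hx))).div_const W).congr_deriv ?_,
    fun x hx => ((((hG.right.hasDerivWithinAt' x hx).mul (hφ hx)).sub
    ((hG.left.hasDerivWithinAt' x hx).mul (hχ hx))).div_const W).congr_deriv ?_⟩
  · rw [greenSolution]
    ring
  · have hW : (φ' x * χ x - φ x * χ' x) * g x / W = g x := by
      rw [hG.wronskian hx, mul_div_cancel_left₀ _ hG.wronskian_ne_zero]
    rw [greenSolution]
    linear_combination -hW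

theorem boundaryCondition_left_greenSolution (hG : IsGreenPair a b α β Q W φ φ' χ χ')
    (g : ℝ → ℝ) : BoundaryCondition α (greenSolution a b W φ χ φ χ g a)
      (greenSolution a b W φ χ φ' χ' g a) := by
  have hbc : φ a * Real.cos α + φ' a * Real.sin α = 0 := hG.boundaryCondition_left
  simp only [BoundaryCondition, greenSolution, intervalIntegral.integral_same]
  linear_combination (-(∫ t in b..a, χ t * g t) / W) * hbc

theorem boundaryCondition_right_greenSolution (hG : IsGreenPair a b α β Q W φ φ' χ χ')
    (g : ℝ → ℝ) : BoundaryCondition β (greenSolution a b W φ χ φ χ g b)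
      (greenSolution a b W φ χ φ' χ' g b) := by
  have hbc : χ b * Real.cos β + χ' b * Real.sin β = 0 := hG.boundaryCondition_right
  simp only [BoundaryCondition, greenSolution, intervalIntegral.integral_same]
  linear_combination ((∫ t in a..b, φ t * g t) / W) * hbc

theorem eq_integral_greenFunction_mul (hG : IsGreenPair a b α β Q W φ φ' χ χ')
    (hg : ContinuousOn g (Icc a b)) (hu : HasSecondDerivOn a b u u' fun x => Q x * u x - g x)
    (hua : BoundaryCondition α (u a) (u' a)) (hub : BoundaryCondition β (u b) (u' b)) {x : ℝ}
    (hx : x ∈ Icc a b) : u x = ∫ t in a..b, greenFunction W φ χ x t * g t := by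
  have hab := hx.1.trans hx.2
  rw [hG.integral_greenFunction_mul hg hx]
  set v := greenSolution a b W φ χ φ χ g
  set v' := greenSolution a b W φ χ φ' χ' g
  have hd : IsSolutionOn a b Q (fun x => u x - 1 * v x) (fun x => u' x - 1 * v' x) :=
    (hu.sub_mul (hG.hasSecondDerivOn_greenSolution hg) 1).congr fun x _ => by ring
  have hφ := hG.left.wronskian_eq hd hx (left_mem_Icc.2 hab)
  have hχ := hG.right.wronskian_eq hd hx (right_mem_Icc.2 hab)
  have hva := hG.boundaryCondition_left.wronskian_eq_zero
    (hG.boundaryCondition_left_greenSolution g)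
  have hvb := hG.boundaryCondition_right.wronskian_eq_zero
    (hG.boundaryCondition_right_greenSolution g)
  have hzero : (u x - v x) * W = 0 := by
    linear_combination φ x * hχ - χ x * hφ - (u x - v x) * hG.wronskian hx
      - χ x * (hG.boundaryCondition_left.wronskian_eq_zero hua - hva)
      + φ x * (hG.boundaryCondition_right.wronskian_eq_zero hub - hvb)
  exact sub_eq_zero.1 ((mul_eq_zero.1 hzero).resolve_right hG.wronskian_ne_zero)

theorem integral_integral_greenFunction_mul_comm (hG : IsGreenPair a b α β Q W φ φ' χ χ')
    (hab : a ≤ b) (hQ : ContinuousOn Q (Icc a b)) (hg : ContinuousOn g (Icc a b))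
    (hh : ContinuousOn h (Icc a b)) :
    ∫ x in a..b, (∫ t in a..b, greenFunction W φ χ x t * g t) * h x
      = ∫ x in a..b, g x * ∫ t in a..b, greenFunction W φ χ x t * h t := by
  have hu := hG.hasSecondDerivOn_greenSolution hg
  have hv := hG.hasSecondDerivOn_greenSolution hh
  have hlagrange := integral_mul_sub_mul_eq_zero hab hu hv
    ((hQ.mul hu.continuousOn).sub hg) ((hQ.mul hv.continuousOn).sub hh)
    (hG.boundaryCondition_left_greenSolution g) (hG.boundaryCondition_left_greenSolution h)
    (hG.boundaryCondition_right_greenSolution g) (hG.boundaryCondition_right_greenSolution h)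
  rw [← neg_eq_zero, ← intervalIntegral.integral_neg] at hlagrange
  set S := greenSolution a b W φ χ φ χ
  have hS {k : ℝ → ℝ} (hk : ContinuousOn k (Icc a b)) {x : ℝ} (hx : x ∈ uIcc a b) :
      ∫ t in a..b, greenFunction W φ χ x t * k t = S k x :=
    hG.integral_greenFunction_mul hk (by rwa [uIcc_of_le hab] at hx)
  rw [intervalIntegral.integral_congr (g := fun x => S g x * h x) fun x hx => by
      simp only [hS hg hx],
    intervalIntegral.integral_congr (f := fun x => g x * _) (g := fun x => g x * S h x)
      fun x hx => by simp only [hS hh hx],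
    ← sub_eq_zero, ← intervalIntegral.integral_sub
      ((hu.continuousOn.fun_mul hh).intervalIntegrable_of_Icc hab)
      ((hg.fun_mul hv.continuousOn).intervalIntegrable_of_Icc hab), ← hlagrange]
  exact intervalIntegral.integral_congr fun x _ => by ring

end IsGreenPair

/-! ### Compact symmetric operators -/

section Operators

open scoped InnerProductSpace

variable {𝕜 E F H : Type*} [RCLike 𝕜] [NormedAddCommGroup E] [NormedSpace 𝕜 E]
  [NormedAddCommGroup F] [NormedSpace 𝕜 F] [NormedAddCommGroup H] [InnerProductSpace 𝕜 H]

/-- The integral operator `g ↦ (x ↦ ⟪Γ x, g⟫)`, whose kernel is a continuous family `Γ` of vectors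
of an inner product space. -/
noncomputable def kernelOperator {X : Type*} [TopologicalSpace X] [CompactSpace X] (Γ : C(X, H)) :
    H →L[𝕜] C(X, 𝕜) :=
  LinearMap.mkContinuous
    { toFun := fun g => ⟨fun x => ⟪Γ x, g⟫_𝕜, by fun_prop⟩
      map_add' := fun u v => by ext x; simp [inner_add_right]
      map_smul' := fun r u => by ext x; simp [inner_smul_right] } ‖Γ‖ fun g =>
    (ContinuousMap.norm_le _ (by positivity)).2 fun x => (norm_inner_le_norm _ _).trans <|
      mul_le_mul_of_nonneg_right (Γ.norm_coe_le_norm x) (norm_nonneg g)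

section KernelOperator

variable {X : Type*} [TopologicalSpace X] [CompactSpace X]

theorem norm_kernelOperator_le (Γ : C(X, H)) : ‖kernelOperator (𝕜 := 𝕜) Γ‖ ≤ ‖Γ‖ :=
  LinearMap.mkContinuous_norm_le _ (norm_nonneg _) _

theorem isCompactOperator_kernelOperator (Γ : C(X, H)) :
    IsCompactOperator (kernelOperator (𝕜 := 𝕜) Γ) := by
  refine (isCompactOperator_iff_isCompact_closure_image_closedBall
    ((kernelOperator Γ : H →L[𝕜] C(X, 𝕜)) : H →ₗ[𝕜] C(X, 𝕜)) zero_lt_one).2 ?_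
  rw [ContinuousLinearMap.coe_coe,
    ← (ContinuousMap.isometryEquivBoundedOfCompact X 𝕜).toHomeomorph.isCompact_image,
    Homeomorph.image_closure]
  refine BoundedContinuousFunction.arzela_ascoli (Metric.closedBall 0 ‖Γ‖)
    (isCompact_closedBall _ _) _ ?_ fun x => Metric.equicontinuousAt_iff_right.2 fun ε hε => ?_
  · rintro _ x ⟨_, ⟨g, hg, rfl⟩, rfl⟩
    rw [mem_closedBall_zero_iff] at hg ⊢
    exact ((norm_inner_le_norm _ _).trans <|
      mul_le_mul (Γ.norm_coe_le_norm x) hg (norm_nonneg g) (norm_nonneg Γ)).trans_eq (mul_one _)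
  · filter_upwards [Metric.continuous_iff'.1 Γ.continuous x ε hε] with x' hx'
    rintro ⟨_, ⟨_, ⟨g, hg, rfl⟩, rfl⟩⟩
    rw [mem_closedBall_zero_iff] at hg
    change dist (⟪Γ x, g⟫_𝕜) (⟪Γ x', g⟫_𝕜) < ε
    rw [dist_eq_norm, ← inner_sub_left]
    calc ‖⟪Γ x - Γ x', g⟫_𝕜‖ ≤ ‖Γ x - Γ x'‖ * ‖g‖ := norm_inner_le_norm _ _
      _ ≤ ‖Γ x - Γ x'‖ * 1 := mul_le_mul_of_nonneg_left hg (norm_nonneg _)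
      _ < ε := by rwa [mul_one, ← dist_eq_norm, dist_comm]

end KernelOperator

/-- `R = A (1 + B A)⁻¹`, characterized without inverses: `R u` is the only solution of
`x = A (u - B x)`. If `A` is the inverse of an operator `L`, then `R` is that of `L + B`. -/
def IsPerturbedInverse (A : E →L[𝕜] F) (B : F →L[𝕜] E) (R : E →L[𝕜] F) : Prop :=
  ∀ u x, R u = x ↔ x = A (u - B x)

theorem exists_isPerturbedInverse [CompleteSpace E] {A : E →L[𝕜] F} {B : F →L[𝕜] E}
    (hBA : ‖B ∘L A‖ < 1) : ∃ R, IsPerturbedInverse A B R := by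
  let U : (E →L[𝕜] E)ˣ := Units.oneSub (-(B ∘L A)) (by rwa [norm_neg])
  have hU (g : E) : (U : E →L[𝕜] E) g = g + B (A g) := by simp [U]
  have hmul (u : E) : (U : E →L[𝕜] E) ((↑U⁻¹ : E →L[𝕜] E) u) = u :=
    DFunLike.congr_fun U.mul_inv u
  have hinv (g : E) : (↑U⁻¹ : E →L[𝕜] E) ((U : E →L[𝕜] E) g) = g :=
    DFunLike.congr_fun U.inv_mul g
  refine ⟨A ∘L (↑U⁻¹ : E →L[𝕜] E), fun u x => ⟨?_, fun hx => ?_⟩⟩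
  · rintro rfl
    have hu := hmul u
    rw [hU] at hu
    exact congrArg A (eq_sub_of_add_eq hu)
  · have hu : (U : E →L[𝕜] E) (u - B x) = u := by rw [hU, ← hx, sub_add_cancel]
    calc A ((↑U⁻¹ : E →L[𝕜] E) u) = A (u - B x) := by rw [← hinv (u - B x), hu]
      _ = x := hx.symm

namespace IsPerturbedInverse

variable {A : E →L[𝕜] F} {B : F →L[𝕜] E} {R : E →L[𝕜] F}

theorem apply_eq (hR : IsPerturbedInverse A B R) (u : E) : R u = A (u - B (R u)) :=
  (hR u (R u)).1 rfl

theorem isCompactOperator (hR : IsPerturbedInverse A B R) (hA : IsCompactOperator A) :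
    IsCompactOperator R := by
  have : (R : E → F) = A ∘ (ContinuousLinearMap.id 𝕜 E - B ∘L R) := funext hR.apply_eq
  rw [this]
  exact hA.comp_clm _

theorem inner_comm {A : H →L[𝕜] F} {B : F →L[𝕜] H} {R : H →L[𝕜] F} {J : F →L[𝕜] H}
    (hR : IsPerturbedInverse A B R) (hA : ∀ u v, ⟪J (A u), v⟫_𝕜 = ⟪u, J (A v)⟫_𝕜)
    (hB : ∀ x z, ⟪J x, B z⟫_𝕜 = ⟪B x, J z⟫_𝕜) (u v : H) : ⟪J (R u), v⟫_𝕜 = ⟪u, J (R v)⟫_𝕜 := by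
  have h := hA (u - B (R u)) (v - B (R v))
  rw [← hR.apply_eq, ← hR.apply_eq, inner_sub_right, inner_sub_left, hB] at h
  exact sub_left_injective h

end IsPerturbedInverse

theorem apply_eq_zero_of_mem_orthogonal [CompleteSpace H] {T : H →L[𝕜] H}
    (hT : IsCompactOperator T) (hsymm : (T : H →ₗ[𝕜] H).IsSymmetric) {S : Submodule 𝕜 H}
    (hS : ∀ μ : 𝕜, μ ≠ 0 → Module.End.eigenspace (T : H →ₗ[𝕜] H) μ ≤ S) {g : H} (hg : g ∈ Sᗮ) :
    T g = 0 := by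
  rw [← Submodule.mem_bot 𝕜,
    ← ContinuousLinearMap.orthogonalComplement_iSup_eigenspaces_eq_bot hT hsymm,
    ← Submodule.iInf_orthogonal, Submodule.mem_iInf]
  intro μ w hw
  have hTw : T w = μ • w := Module.End.mem_eigenspace_iff.1 hw
  calc ⟪w, T g⟫_𝕜 = ⟪T w, g⟫_𝕜 := (hsymm w g).symm
    _ = 0 := by
      rw [hTw, inner_smul_left]
      rcases eq_or_ne μ 0 with rfl | hμ
      · simp
      · rw [hg w (hS μ hμ hw), mul_zero]

theorem hasSum_inner_smul_apply_of_forall_mem_orthogonal [CompleteSpace H] {ι : Type*} {Y : ι → H}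
    (hY : Orthonormal 𝕜 Y) {R : H →L[𝕜] F}
    (hR : ∀ g ∈ (Submodule.span 𝕜 (range Y))ᗮ, R g = 0) (f : H) :
    HasSum (fun n => ⟪Y n, f⟫_𝕜 • R (Y n)) (R f) := by
  obtain ⟨w, basis, hw, hbasis⟩ := hY.toSubtypeRange.exists_hilbertBasis_extension
  let i : ι → w := fun n => ⟨Y n, hw ⟨n, rfl⟩⟩
  have hi : Function.Injective i := fun m n h =>
    hY.linearIndependent.injective (congrArg Subtype.val h)
  have hsum : HasSum (fun z : w => ⟪(z : H), f⟫_𝕜 • R z) (R f) := by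
    have := (basis.hasSum_repr f).mapL R
    simpa only [map_smul, basis.repr_apply_apply, hbasis] using this
  refine (hi.hasSum_iff fun z hz => ?_).2 hsum
  have hz' : (z : H) ∈ (Submodule.span 𝕜 (range Y))ᗮ := by
    rw [← Submodule.span_singleton_le_iff_mem, ← Submodule.isOrtho_iff_le, Submodule.isOrtho_span]
    rintro _ rfl _ ⟨n, rfl⟩
    have := basis.orthonormal.2 (i := z) (j := i n) fun h => hz ⟨n, h.symm⟩
    rwa [hbasis] at this
  rw [hR z hz', smul_zero]

theorem exists_norm_lt_of_forall_apply_eq_smul {T : H →L[𝕜] H} (hT : IsCompactOperator T)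
    {Y : ℕ → H} (hY : Orthonormal 𝕜 Y) {θ : ℕ → 𝕜} (hTY : ∀ n, T (Y n) = θ n • Y n) {ε : ℝ}
    (hε : 0 < ε) : ∃ n, ‖θ n‖ < ε := by
  by_contra! hθ
  obtain ⟨z, -, ψ, hψ, hz⟩ := (hT.isCompact_closure_image_closedBall (𝕜₁ := 𝕜) 1).tendsto_subseq
    (x := fun n => T (Y n)) fun n => subset_closure ⟨Y n, by simp [hY.1 n], rfl⟩
  obtain ⟨N, hN⟩ := Metric.cauchySeq_iff'.1 hz.cauchySeq ε hε
  have hdist := hN (N + 1) N.le_succ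
  simp only [Function.comp, hTY, dist_eq_norm] at hdist
  have hpyth : ‖θ (ψ (N + 1)) • Y (ψ (N + 1)) - θ (ψ N) • Y (ψ N)‖ ^ 2
      = ‖θ (ψ (N + 1))‖ ^ 2 + ‖θ (ψ N)‖ ^ 2 := by
    rw [@norm_sub_sq 𝕜, norm_smul, norm_smul, hY.1, hY.1, inner_smul_left, inner_smul_right,
      hY.2 (hψ N.lt_succ_self).ne']
    simp
  nlinarith [hθ (ψ N), norm_nonneg (θ (ψ (N + 1)) • Y (ψ (N + 1)) - θ (ψ N) • Y (ψ N))]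

end Operators

/-! ### The resolvent and its eigenfunction expansion -/

section Resolvent

open scoped InnerProductSpace

variable {a b : ℝ}

/-- The restriction of a function that is continuous on `[a, b]`, as an element of the Banach space
`C([a, b])`. -/
def restrictIcc {f : ℝ → ℝ} (hf : ContinuousOn f (Icc a b)) : C(Icc a b, ℝ) :=
  ⟨(Icc a b).domRestrict f, hf.domRestrict⟩

theorem restrictIcc_apply {f : ℝ → ℝ} (hf : ContinuousOn f (Icc a b)) (x : Icc a b) :
    restrictIcc hf x = f x := rfl

theorem exists_continuousOn_eq_restrictIcc (u : C(Icc a b, ℝ)) :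
    ∃ (f : ℝ → ℝ) (hf : ContinuousOn f (Icc a b)), u = restrictIcc hf := by
  rcases le_or_gt a b with hab | hab
  · exact ⟨IccExtend hab u, u.continuous.Icc_extend'.continuousOn,
      ContinuousMap.ext fun x => (IccExtend_val hab u x).symm⟩
  · exact ⟨0, continuousOn_const, ContinuousMap.ext fun x =>
      absurd (x.2.1.trans x.2.2) hab.not_ge⟩

/-- Lebesgue measure on the subtype `[a, b]`. -/
noncomputable def volumeIcc (a b : ℝ) : Measure (Icc a b) := volume.comap Subtype.val

instance (a b : ℝ) : IsFiniteMeasure (volumeIcc a b) :=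
  ⟨by rw [volumeIcc, (MeasurableEmbedding.subtype_coe measurableSet_Icc).comap_apply, image_univ,
    Subtype.range_coe]; exact measure_Icc_lt_top⟩

/-- The Hilbert space `L²([a, b])`. -/
abbrev L2Icc (a b : ℝ) : Type := Lp ℝ 2 (volumeIcc a b)

/-- The embedding of `C([a, b])` into the Hilbert space `L²([a, b])`. -/
noncomputable def toL2 (a b : ℝ) : C(Icc a b, ℝ) →L[ℝ] L2Icc a b :=
  ContinuousMap.toLp 2 (volumeIcc a b) ℝ

theorem denseRange_toL2 : DenseRange (toL2 a b) :=
  ContinuousMap.toLp_denseRange ℝ (volumeIcc a b) ℝ (by simp)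

theorem inner_toL2 (hab : a ≤ b) {u v : C(Icc a b, ℝ)} {f g : ℝ → ℝ}
    (hu : ∀ x : Icc a b, u x = f x) (hv : ∀ x : Icc a b, v x = g x) :
    ⟪toL2 a b u, toL2 a b v⟫_ℝ = ∫ x in a..b, f x * g x := by
  rw [toL2, ContinuousMap.inner_toLp, volumeIcc, intervalIntegral.integral_of_le hab,
    ← integral_Icc_eq_integral_Ioc, ← integral_subtype_comap measurableSet_Icc]
  exact integral_congr_ae (Eventually.of_forall fun x => by simp [hu, hv, mul_comm])

theorem toL2_injective (hab : a < b) : Function.Injective (toL2 a b) := by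
  refine (injective_iff_map_eq_zero _).2 fun u hu => ?_
  obtain ⟨f, hf, rfl⟩ := exists_continuousOn_eq_restrictIcc u
  have hzero : ∫ x in a..b, f x * f x = 0 := by
    rw [← inner_toL2 hab.le (restrictIcc_apply hf) (restrictIcc_apply hf), hu, inner_zero_left]
  by_contra hne
  obtain ⟨x, hx⟩ := DFunLike.ne_iff.1 hne
  exact (intervalIntegral.integral_pos hab (hf.mul hf) (fun _ _ => mul_self_nonneg _)
    ⟨x, x.2, mul_self_pos.2 hx⟩).ne' hzero

namespace IsGreenPair

variable {α β W : ℝ} {Q φ φ' χ χ' : ℝ → ℝ} (hG : IsGreenPair a b α β Q W φ φ' χ χ')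

/-- The Green function as a continuous map `x ↦ G(x, ·)` with values in `C([a, b])`. -/
noncomputable def kernel : C(Icc a b, C(Icc a b, ℝ)) :=
  ContinuousMap.curry ⟨fun p => greenFunction W φ χ p.1 p.2,
    hG.continuousOn_greenFunction.comp_continuous (f := Prod.map Subtype.val Subtype.val)
      (by fun_prop) fun p => ⟨p.1.2, p.2.2⟩⟩

/-- The inverse of `u ↦ Q u - u''` under the boundary conditions, as an operator from `L²([a, b])`
to `C([a, b])`. -/
noncomputable def greenOperator : L2Icc a b →L[ℝ] C(Icc a b, ℝ) :=
  kernelOperator ((⟨toL2 a b, (toL2 a b).continuous⟩ : C(_, _)).comp hG.kernel)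

theorem greenOperator_toL2 (hab : a ≤ b) {u : C(Icc a b, ℝ)} {g : ℝ → ℝ}
    (hu : ∀ x : Icc a b, u x = g x) (x : Icc a b) :
    hG.greenOperator (toL2 a b u) x = ∫ t in a..b, greenFunction W φ χ x t * g t :=
  inner_toL2 hab (fun _ => rfl) hu

theorem norm_greenOperator_le {M : ℝ} (hM : ∀ x ∈ Icc a b, ∀ t ∈ Icc a b,
    |greenFunction W φ χ x t| ≤ M) (hM₀ : 0 ≤ M) : ‖hG.greenOperator‖ ≤ ‖toL2 a b‖ * M := by
  refine (norm_kernelOperator_le _).trans <| (ContinuousMap.norm_le _ (by positivity)).2 fun x =>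
    ((toL2 a b).le_opNorm _).trans <| mul_le_mul_of_nonneg_left ?_ (norm_nonneg _)
  exact (ContinuousMap.norm_le _ hM₀).2 fun t => hM x x.2 t t.2

theorem inner_greenOperator_comm (hab : a ≤ b) (hQ : ContinuousOn Q (Icc a b))
    (u v : L2Icc a b) :
    ⟪toL2 a b (hG.greenOperator u), v⟫_ℝ = ⟪u, toL2 a b (hG.greenOperator v)⟫_ℝ := by
  refine denseRange_toL2.induction_on₂ (isClosed_eq (by fun_prop) (by fun_prop)) (fun u v => ?_) u v
  obtain ⟨g, hg, rfl⟩ := exists_continuousOn_eq_restrictIcc u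
  obtain ⟨h, hh, rfl⟩ := exists_continuousOn_eq_restrictIcc v
  rw [inner_toL2 hab (f := fun x => ∫ t in a..b, greenFunction W φ χ x t * g t)
      (hG.greenOperator_toL2 hab (restrictIcc_apply hg)) (restrictIcc_apply hh),
    inner_toL2 hab (g := fun x => ∫ t in a..b, greenFunction W φ χ x t * h t)
      (restrictIcc_apply hg) (hG.greenOperator_toL2 hab (restrictIcc_apply hh))]
  exact hG.integral_integral_greenFunction_mul_comm hab hQ hg hh

end IsGreenPair

/-- Multiplication by a continuous function, as an operator from `C([a, b])` to `L²([a, b])`. -/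
noncomputable def mulToL2 (p : C(Icc a b, ℝ)) : C(Icc a b, ℝ) →L[ℝ] L2Icc a b :=
  toL2 a b ∘L ContinuousLinearMap.mul ℝ C(Icc a b, ℝ) p

theorem mulToL2_apply (p u : C(Icc a b, ℝ)) : mulToL2 p u = toL2 a b (p * u) := rfl

theorem norm_mulToL2_le (p : C(Icc a b, ℝ)) : ‖mulToL2 p‖ ≤ ‖toL2 a b‖ * ‖p‖ :=
  (ContinuousLinearMap.opNorm_comp_le _ _).trans <| mul_le_mul_of_nonneg_left
    (ContinuousLinearMap.opNorm_mul_apply_le ℝ C(Icc a b, ℝ) p) (norm_nonneg _)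

theorem inner_mulToL2_comm (hab : a ≤ b) (p u v : C(Icc a b, ℝ)) :
    ⟪toL2 a b u, mulToL2 p v⟫_ℝ = ⟪mulToL2 p u, toL2 a b v⟫_ℝ := by
  obtain ⟨h, hh, rfl⟩ := exists_continuousOn_eq_restrictIcc p
  obtain ⟨f, hf, rfl⟩ := exists_continuousOn_eq_restrictIcc u
  obtain ⟨g, hg, rfl⟩ := exists_continuousOn_eq_restrictIcc v
  rw [mulToL2_apply, mulToL2_apply,
    inner_toL2 hab (restrictIcc_apply hf) (g := fun x => h x * g x) fun _ => rfl,
    inner_toL2 hab (f := fun x => h x * f x) (fun _ => rfl) (restrictIcc_apply hg)]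
  exact intervalIntegral.integral_congr fun x _ => by ring

/-- The eigenvalues `lam 0 < lam 1 < ⋯` of the Sturm–Liouville problem, complete and each with an
eigenfunction of unit norm in `L²([a, b])`. -/
structure IsSLEigensystem (a b : ℝ) (q : ℝ → ℝ) (α β : ℝ) (lam : ℕ → ℝ) (y : ℕ → ℝ → ℝ) :
    Prop where
  isSLEigenpair : ∀ n, IsSLEigenpair a b q α β (lam n) (y n)
  strictMono : StrictMono lam
  exists_eq : ∀ μ z, IsSLEigenpair a b q α β μ z → ∃ n, lam n = μ
  integral_sq : ∀ n, ∫ x in a..b, y n x ^ 2 = 1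

/-- `R` is the inverse of `u ↦ (q + ρ) u - u''` under the boundary conditions, obtained by
perturbing the Green operator of `u ↦ ρ u - u''`. -/
def IsResolvent {α β W ρ : ℝ} {φ φ' χ χ' : ℝ → ℝ}
    (hG : IsGreenPair a b α β (fun _ => ρ) W φ φ' χ χ') {q : ℝ → ℝ}
    (hq : ContinuousOn q (Icc a b)) (R : L2Icc a b →L[ℝ] C(Icc a b, ℝ)) : Prop :=
  IsPerturbedInverse hG.greenOperator (mulToL2 (restrictIcc hq)) R

variable {α β W ρ : ℝ} {q φ φ' χ χ' : ℝ → ℝ}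

theorem exists_isResolvent (hq : ContinuousOn q (Icc a b)) : ∃ ε > 0,
    ∀ {α β W ρ M : ℝ} {φ φ' χ χ' : ℝ → ℝ} (hG : IsGreenPair a b α β (fun _ => ρ) W φ φ' χ χ'),
      0 ≤ M → M < ε → (∀ x ∈ Icc a b, ∀ t ∈ Icc a b, |greenFunction W φ χ x t| ≤ M) →
      ∃ R, IsResolvent hG hq R := by
  set J := toL2 a b
  set p := restrictIcc hq
  refine ⟨(‖J‖ * ‖p‖ * ‖J‖ + 1)⁻¹, by positivity, fun {_ _ _ _ M _ _ _ _} hG hM₀ hMε hM =>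
    exists_isPerturbedInverse ?_⟩
  calc ‖mulToL2 p ∘L hG.greenOperator‖ ≤ ‖mulToL2 p‖ * ‖hG.greenOperator‖ :=
        ContinuousLinearMap.opNorm_comp_le _ _
    _ ≤ ‖J‖ * ‖p‖ * (‖J‖ * M) := mul_le_mul (norm_mulToL2_le p)
        (hG.norm_greenOperator_le hM hM₀) (ContinuousLinearMap.opNorm_nonneg _) (by positivity)
    _ ≤ (‖J‖ * ‖p‖ * ‖J‖ + 1) * M := by linarith
    _ < 1 := by rwa [← lt_inv_mul_iff₀ (by positivity), mul_one]

namespace IsResolvent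

variable {hG : IsGreenPair a b α β (fun _ => ρ) W φ φ' χ χ'} {hq : ContinuousOn q (Icc a b)}
  {R : L2Icc a b →L[ℝ] C(Icc a b, ℝ)}

theorem isCompactOperator_comp (hR : IsResolvent hG hq R) : IsCompactOperator (toL2 a b ∘L R) :=
  (IsPerturbedInverse.isCompactOperator hR (isCompactOperator_kernelOperator _)).clm_comp
    (toL2 a b)

theorem isSymmetric_comp (hR : IsResolvent hG hq R) (hab : a ≤ b) :
    ((toL2 a b ∘L R : L2Icc a b →L[ℝ] L2Icc a b) : L2Icc a b →ₗ[ℝ] L2Icc a b).IsSymmetric :=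
  IsPerturbedInverse.inner_comm hR (hG.inner_greenOperator_comm hab continuousOn_const)
    (inner_mulToL2_comm hab _)

theorem apply_toL2_eq_integral (hR : IsResolvent hG hq R) (hab : a ≤ b) {f v : ℝ → ℝ}
    {u : C(Icc a b, ℝ)} (hu : ∀ x : Icc a b, u x = f x)
    (hv : ∀ x : Icc a b, R (toL2 a b u) x = v x) {x : ℝ} (hx : x ∈ Icc a b) :
    v x = ∫ t in a..b, greenFunction W φ χ x t * (f t - q t * v t) := by
  rw [← hG.greenOperator_toL2 hab (u := u - restrictIcc hq * R (toL2 a b u))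
    (fun t => by simp [hu, hv, restrictIcc_apply]) ⟨x, hx⟩, map_sub, ← mulToL2_apply,
    ← IsPerturbedInverse.apply_eq hR, hv]

theorem smul_apply_toL2_of_isSLEigenpair (hR : IsResolvent hG hq R) (hab : a ≤ b) {lam : ℝ}
    {y : ℝ → ℝ} (hy : IsSLEigenpair a b q α β lam y) {u : C(Icc a b, ℝ)}
    (hu : ∀ x : Icc a b, u x = y x) : (lam + ρ) • R (toL2 a b u) = u := by
  obtain ⟨y', hsol, hbca, hbcb, -⟩ := (isSLEigenpair_iff hq).1 hy
  have hcont : ContinuousOn (fun x => (lam + ρ) * y x - q x * y x) (Icc a b) :=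
    (hsol.continuousOn.const_mul _).sub (hq.mul hsol.continuousOn)
  have hfix : u = hG.greenOperator (toL2 a b ((lam + ρ) • u - restrictIcc hq * u)) := by
    ext x
    rw [hG.greenOperator_toL2 hab (g := fun x => (lam + ρ) * y x - q x * y x) fun t => by
      simp [hu, restrictIcc_apply], hu]
    exact hG.eq_integral_greenFunction_mul hcont (hsol.congr fun t _ => by ring) hbca hbcb x.2
  rw [map_sub, ← mulToL2_apply, ← hR, map_smul, map_smul] at hfix
  exact hfix

theorem exists_isSLEigenpair_of_apply_eq_smul (hR : IsResolvent hG hq R) (hab : a ≤ b)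
    {w : L2Icc a b} {μ : ℝ} (hμ : μ ≠ 0) (hw : w ≠ 0) (hRw : toL2 a b (R w) = μ • w) :
    ∃ z, IsSLEigenpair a b q α β (μ⁻¹ - ρ) z ∧ ∀ x : Icc a b, R w x = z x := by
  obtain ⟨u, hu, hRu⟩ := exists_continuousOn_eq_restrictIcc (R w)
  have hwu : w = toL2 a b (μ⁻¹ • R w) := by rw [map_smul, eq_inv_smul_iff₀ hμ, hRw]
  set g : ℝ → ℝ := fun x => μ⁻¹ * u x - q x * u x
  have hg : ContinuousOn g (Icc a b) := (hu.const_mul _).sub (hq.mul hu)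
  set z := greenSolution a b W φ χ φ χ g
  have huz (x : Icc a b) : R w x = z x := by
    have := hR.apply_toL2_eq_integral hab (f := fun x => μ⁻¹ * u x) (v := u) (u := μ⁻¹ • R w)
      (fun x => by simp [hRu, restrictIcc_apply])
      (fun x => by rw [← hwu, hRu, restrictIcc_apply]) x.2
    rw [hRu, restrictIcc_apply, this]
    exact hG.integral_greenFunction_mul hg x.2
  refine ⟨z, (isSLEigenpair_iff hq).2 ⟨greenSolution a b W φ χ φ' χ' g,
    (hG.hasSecondDerivOn_greenSolution hg).congr fun x hx => ?_,
    hG.boundaryCondition_left_greenSolution g, hG.boundaryCondition_right_greenSolution g, ?_⟩, huz⟩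
  · have hux : u x = z x := by rw [← huz ⟨x, hx⟩, hRu, restrictIcc_apply]
    simp only [g]
    rw [hux]
    ring
  · by_contra! hz
    have hRw₀ : R w = 0 := ContinuousMap.ext fun x => (huz x).trans (hz x x.2)
    exact hw (by rw [hwu, hRw₀, smul_zero, map_zero])

end IsResolvent

namespace IsSLEigensystem

variable {lam : ℕ → ℝ} {y : ℕ → ℝ → ℝ} (hS : IsSLEigensystem a b q α β lam y)
include hS

theorem continuousOn (n : ℕ) : ContinuousOn (y n) (Icc a b) := by
  obtain ⟨y', -, hy, -⟩ := hS.isSLEigenpair n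
  exact fun x hx => (hy x hx).continuousWithinAt

/-- The `n`-th eigenfunction as a vector of `L²([a, b])`. -/
noncomputable def vector (n : ℕ) : L2Icc a b :=
  toL2 a b (restrictIcc (hS.continuousOn n))

theorem inner_vector (hab : a ≤ b) (n : ℕ) {f : ℝ → ℝ} (hf : ContinuousOn f (Icc a b)) :
    ⟪hS.vector n, toL2 a b (restrictIcc hf)⟫_ℝ = ∫ x in a..b, y n x * f x :=
  inner_toL2 hab (restrictIcc_apply _) (restrictIcc_apply _)

theorem orthonormal (hab : a ≤ b) (hq : ContinuousOn q (Icc a b)) :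
    Orthonormal ℝ hS.vector := by
  rw [orthonormal_iff_ite]
  intro m n
  change ⟪hS.vector m, toL2 a b (restrictIcc (hS.continuousOn n))⟫_ℝ = _
  rw [hS.inner_vector hab]
  split_ifs with h
  · simpa only [h, sq] using hS.integral_sq n
  · exact integral_mul_eq_zero_of_isSLEigenpair hab hq (hS.isSLEigenpair m) (hS.isSLEigenpair n)
      (hS.strictMono.injective.ne h)

variable {hG : IsGreenPair a b α β (fun _ => ρ) W φ φ' χ χ'} {hq : ContinuousOn q (Icc a b)}
  {R : L2Icc a b →L[ℝ] C(Icc a b, ℝ)}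

theorem add_ne_zero_of_isResolvent (hR : IsResolvent hG hq R) (hab : a ≤ b) (n : ℕ) :
    lam n + ρ ≠ 0 := by
  intro h
  have hy := hR.smul_apply_toL2_of_isSLEigenpair hab (hS.isSLEigenpair n)
    (restrictIcc_apply (hS.continuousOn n))
  rw [h, zero_smul] at hy
  refine (hS.orthonormal hab hq).ne_zero n ?_
  rw [vector, ← hy, map_zero]

theorem apply_vector_of_isResolvent (hR : IsResolvent hG hq R) (hab : a ≤ b) (n : ℕ) :
    R (hS.vector n) = (lam n + ρ)⁻¹ • restrictIcc (hS.continuousOn n) := by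
  rw [eq_inv_smul_iff₀ (hS.add_ne_zero_of_isResolvent hR hab n)]
  exact hR.smul_apply_toL2_of_isSLEigenpair hab (hS.isSLEigenpair n) (restrictIcc_apply _)

theorem exists_lt (hR : IsResolvent hG hq R) (hab : a ≤ b) (L : ℝ) : ∃ n, L < lam n := by
  obtain ⟨n, hn⟩ := exists_norm_lt_of_forall_apply_eq_smul hR.isCompactOperator_comp
    (hS.orthonormal hab hq) (θ := fun n => (lam n + ρ)⁻¹)
    (fun n => by
      rw [ContinuousLinearMap.comp_apply, hS.apply_vector_of_isResolvent hR hab, map_smul, vector])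
    (ε := (|L + ρ| + |lam 0 + ρ| + 1)⁻¹) (by positivity)
  rw [norm_inv, inv_lt_inv₀ (norm_pos_iff.2 (hS.add_ne_zero_of_isResolvent hR hab n))
    (by positivity), Real.norm_eq_abs, lt_abs] at hn
  have hmono := hS.strictMono.monotone (Nat.zero_le n)
  refine ⟨n, ?_⟩
  rcases hn with h | h
  · linarith [le_abs_self (L + ρ), abs_nonneg (lam 0 + ρ)]
  · linarith [neg_abs_le (lam 0 + ρ), abs_nonneg (L + ρ)]

theorem eigenspace_le_span (hR : IsResolvent hG hq R) (hab : a ≤ b) {μ : ℝ} (hμ : μ ≠ 0) :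
    Module.End.eigenspace ((toL2 a b ∘L R : L2Icc a b →L[ℝ] L2Icc a b) : L2Icc a b →ₗ[ℝ] L2Icc a b)
      μ ≤ Submodule.span ℝ (range hS.vector) := by
  intro w hw
  have hRw : toL2 a b (R w) = μ • w := Module.End.mem_eigenspace_iff.1 hw
  rcases eq_or_ne w 0 with rfl | hw₀
  · exact zero_mem _
  obtain ⟨z, hz, hRz⟩ := hR.exists_isSLEigenpair_of_apply_eq_smul hab hμ hw₀ hRw
  obtain ⟨n, hn⟩ := hS.exists_eq _ _ hz
  obtain ⟨z', hz', hbcz, -⟩ := (isSLEigenpair_iff hq).1 (hn ▸ hz)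
  obtain ⟨y', hy', hbcy, -, hne⟩ := (isSLEigenpair_iff hq).1 (hS.isSLEigenpair n)
  obtain ⟨s, hs⟩ := hy'.exists_eq_mul hz' (hq.sub continuousOn_const) hbcy hbcz hne
  have hRs : R w = s • restrictIcc (hS.continuousOn n) :=
    ContinuousMap.ext fun x => (hRz x).trans (hs x x.2)
  rw [hRs, map_smul, eq_comm, ← eq_inv_smul_iff₀ hμ] at hRw
  rw [hRw]
  exact Submodule.smul_mem _ _ (Submodule.smul_mem _ _ (Submodule.subset_span ⟨n, rfl⟩))

theorem hasSum_resolvent_apply (hR : IsResolvent hG hq R) (hab : a < b) {f : ℝ → ℝ}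
    (hf : ContinuousOn f (Icc a b)) (x : Icc a b) :
    HasSum (fun n => (∫ t in a..b, y n t * f t) * y n x / (lam n + ρ))
      (R (toL2 a b (restrictIcc hf)) x) := by
  have hker : ∀ g ∈ (Submodule.span ℝ (range hS.vector))ᗮ, R g = 0 := fun g hg =>
    toL2_injective hab <| (apply_eq_zero_of_mem_orthogonal hR.isCompactOperator_comp
      (hR.isSymmetric_comp hab.le) (fun _ hμ => hS.eigenspace_le_span hR hab.le hμ) hg).trans
      (map_zero _).symm
  have hsum := (hasSum_inner_smul_apply_of_forall_mem_orthogonal (hS.orthonormal hab.le hq) hker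
    (toL2 a b (restrictIcc hf))).mapL (ContinuousMap.evalCLM ℝ x)
  convert hsum using 1
  · ext n
    rw [hS.inner_vector hab.le, hS.apply_vector_of_isResolvent hR hab.le]
    simp only [ContinuousMap.evalCLM_apply, ContinuousMap.smul_apply, restrictIcc_apply,
      smul_eq_mul]
    ring
  · rfl

end IsSLEigensystem

end Resolvent

/-! ### Concentration of the free Green function -/

section FreeGreen

/-- The solution `exp (k u) + r exp (-k u)` of `u'' = k² u`: a growing exponential together with
its reflection. -/
noncomputable def reflectedExp (k r u : ℝ) : ℝ :=
  Real.exp (k * u) + r * Real.exp (-(k * u))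

/-- The coefficient `r` for which `reflectedExp k r` satisfies the boundary condition with angle
`θ` at `0`. -/
noncomputable def reflectionCoeff (θ k : ℝ) : ℝ :=
  (k * Real.sin θ + Real.cos θ) / (k * Real.sin θ - Real.cos θ)

/-- The Wronskian of `reflectedExp k r (· - a)` and `reflectedExp k s (b - ·)`. -/
noncomputable def freeWronskian (a b k r s : ℝ) : ℝ :=
  2 * k * reflectedExp k (-(r * s)) (b - a)

/-- The Green function of `u ↦ k² u - u''` on `[a, b]` with reflection coefficient `r` at `a`
and `s` at `b`. -/
noncomputable def freeGreen (a b k r s : ℝ) : ℝ → ℝ → ℝ :=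
  greenFunction (freeWronskian a b k r s) (fun t => reflectedExp k r (t - a))
    fun t => reflectedExp k s (b - t)

variable {a b k r s u x t θ α β : ℝ}

theorem hasDerivAt_reflectedExp (k r u : ℝ) :
    HasDerivAt (reflectedExp k r) (k * reflectedExp k (-r) u) u := by
  have hlin : HasDerivAt (fun u => k * u) k u := by simpa using (hasDerivAt_id u).const_mul k
  refine (hlin.exp.add (hlin.neg.exp.const_mul r)).congr_deriv ?_
  rw [reflectedExp, Pi.neg_apply]
  ring

theorem isSolutionOn_reflectedExp_sub_const (a b k r : ℝ) :
    IsSolutionOn a b (fun _ => k ^ 2) (fun t => reflectedExp k r (t - a))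
      fun t => k * reflectedExp k (-r) (t - a) where
  hasDerivWithinAt t _ :=
    ((hasDerivAt_reflectedExp k r (t - a)).comp_sub_const t a).hasDerivWithinAt
  hasDerivWithinAt' t _ :=
    (((hasDerivAt_reflectedExp k (-r) (t - a)).comp_sub_const t a).const_mul k).congr_deriv
      (by rw [neg_neg]; ring) |>.hasDerivWithinAt

theorem isSolutionOn_reflectedExp_const_sub (a b k r : ℝ) :
    IsSolutionOn a b (fun _ => k ^ 2) (fun t => reflectedExp k r (b - t))
      fun t => -(k * reflectedExp k (-r) (b - t)) where
  hasDerivWithinAt t _ :=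
    ((hasDerivAt_reflectedExp k r (b - t)).comp_const_sub b t).hasDerivWithinAt
  hasDerivWithinAt' t _ :=
    (((hasDerivAt_reflectedExp k (-r) (b - t)).comp_const_sub b t).const_mul k).neg.congr_deriv
      (by rw [neg_neg]; ring) |>.hasDerivWithinAt

theorem reflectedExp_mem_Icc (hk : 0 ≤ k) (hr : r ∈ Icc (-1) 2) (hu : 0 ≤ u) :
    reflectedExp k r u ∈ Icc 0 (3 * Real.exp (k * u)) := by
  have hle : Real.exp (-(k * u)) ≤ Real.exp (k * u) :=
    Real.exp_le_exp.2 (neg_le_self (mul_nonneg hk hu))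
  have hlow := mul_le_mul_of_nonneg_right hr.1 (Real.exp_pos (-(k * u))).le
  have hupp := mul_le_mul_of_nonneg_right hr.2 (Real.exp_pos (-(k * u))).le
  rw [reflectedExp]
  constructor <;> linarith

theorem mul_exp_le_freeWronskian (hk : 0 ≤ k) (hr : r ∈ Icc (-1) 2) (hs : s ∈ Icc (-1) 2)
    (hkab : 2 ≤ k * (b - a)) : k * Real.exp (k * (b - a)) ≤ freeWronskian a b k r s := by
  have hrs : r * s ≤ 4 := by nlinarith [hr.1, hr.2, hs.1, hs.2]
  have hexp : 3 ≤ Real.exp (k * (b - a)) := by linarith [Real.add_one_le_exp (k * (b - a))]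
  have hinv : Real.exp (k * (b - a)) * Real.exp (-(k * (b - a))) = 1 := by
    rw [← Real.exp_add, add_neg_cancel, Real.exp_zero]
  have hrefl := mul_le_mul_of_nonneg_right hrs (Real.exp_pos (-(k * (b - a)))).le
  have : Real.exp (k * (b - a)) ≤ 2 * reflectedExp k (-(r * s)) (b - a) := by
    rw [reflectedExp]
    nlinarith [hrefl]
  rw [freeWronskian]
  linarith [mul_le_mul_of_nonneg_left this hk]

theorem boundaryCondition_reflectedExp (hk : k * Real.sin θ - Real.cos θ ≠ 0) :
    BoundaryCondition θ (reflectedExp k (reflectionCoeff θ k) 0)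
      (k * reflectedExp k (-reflectionCoeff θ k) 0) := by
  have hr : reflectionCoeff θ k * (k * Real.sin θ - Real.cos θ)
    = k * Real.sin θ + Real.cos θ := div_mul_cancel₀ _ hk
  simp only [BoundaryCondition, reflectedExp, mul_zero, neg_zero, Real.exp_zero]
  linear_combination -hr

theorem mul_sin_sub_cos_ne_zero (hk : k ≠ Real.cot θ) :
    k * Real.sin θ - Real.cos θ ≠ 0 := by
  intro h
  rcases eq_or_ne (Real.sin θ) 0 with hsin | hsin
  · rw [hsin, mul_zero, zero_sub, neg_eq_zero] at h
    simpa [hsin, h] using Real.sin_sq_add_cos_sq θ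
  · exact hk (by rw [Real.cot_eq_cos_div_sin, eq_div_iff hsin, sub_eq_zero.1 h])

theorem tendsto_reflectionCoeff (hθ : Real.sin θ ≠ 0) :
    Tendsto (reflectionCoeff θ) atTop (𝓝 1) := by
  have hcos : Tendsto (fun k : ℝ => Real.cos θ / k) atTop (𝓝 0) :=
    tendsto_const_nhds.div_atTop tendsto_id
  have hlim := (hcos.const_add (Real.sin θ)).div (hcos.const_sub (Real.sin θ)) (by simpa)
  rw [add_zero, sub_zero, div_self hθ] at hlim
  refine hlim.congr' ?_
  filter_upwards [eventually_gt_atTop 0] with k hk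
  rw [Pi.div_apply, reflectionCoeff, ← mul_div_mul_left _ _ hk.ne', mul_add, mul_sub,
    mul_div_cancel₀ _ hk.ne']

theorem eventually_reflectionCoeff_mem_Icc (θ : ℝ) :
    ∀ᶠ k in atTop, reflectionCoeff θ k ∈ Icc (-1) 2 := by
  rcases eq_or_ne (Real.sin θ) 0 with hsin | hsin
  · have hcos : Real.cos θ ≠ 0 := fun h => by
      simpa [hsin, h] using Real.sin_sq_add_cos_sq θ
    refine Eventually.of_forall fun k => ?_
    rw [reflectionCoeff, hsin, mul_zero, zero_add, zero_sub, div_neg, div_self hcos]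
    norm_num
  · exact (tendsto_reflectionCoeff hsin).eventually (Icc_mem_nhds (by norm_num) (by norm_num))

theorem isGreenPair_reflectedExp (hkα : k ≠ Real.cot α) (hkβ : k ≠ Real.cot (-β))
    (hW : freeWronskian a b k (reflectionCoeff α k) (reflectionCoeff (-β) k) ≠ 0) :
    IsGreenPair a b α β (fun _ => k ^ 2)
      (freeWronskian a b k (reflectionCoeff α k) (reflectionCoeff (-β) k))
      (fun t => reflectedExp k (reflectionCoeff α k) (t - a))
      (fun t => k * reflectedExp k (-reflectionCoeff α k) (t - a))
      (fun t => reflectedExp k (reflectionCoeff (-β) k) (b - t))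
      (fun t => -(k * reflectedExp k (-reflectionCoeff (-β) k) (b - t))) where
  left := isSolutionOn_reflectedExp_sub_const a b k _
  right := isSolutionOn_reflectedExp_const_sub a b k _
  boundaryCondition_left := by
    simpa only [sub_self] using boundaryCondition_reflectedExp (mul_sin_sub_cos_ne_zero hkα)
  boundaryCondition_right := by
    have h := boundaryCondition_reflectedExp (mul_sin_sub_cos_ne_zero hkβ)
    rw [BoundaryCondition, Real.cos_neg, Real.sin_neg] at h
    rw [BoundaryCondition, sub_self]
    linear_combination h
  wronskian_left := by
    simp only [freeWronskian, reflectedExp, sub_self, mul_zero, neg_zero, Real.exp_zero]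
    ring
  wronskian_ne_zero := hW

theorem freeGreen_mem_Icc (hk : 0 < k) (hr : r ∈ Icc (-1) 2) (hs : s ∈ Icc (-1) 2)
    (hkab : 2 ≤ k * (b - a)) (hx : x ∈ Icc a b) (ht : t ∈ Icc a b) :
    freeGreen a b k r s x t ∈ Icc 0 (9 / k * Real.exp (-(k * |x - t|))) := by
  obtain ⟨hφ₀, hφ⟩ := reflectedExp_mem_Icc hk.le hr (sub_nonneg.2 (le_min hx.1 ht.1))
  obtain ⟨hχ₀, hχ⟩ := reflectedExp_mem_Icc hk.le hs (sub_nonneg.2 (max_le hx.2 ht.2))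
  have hW := mul_exp_le_freeWronskian hk.le hr hs hkab
  have hW₀ : 0 < k * Real.exp (k * (b - a)) := by positivity
  refine ⟨div_nonneg (mul_nonneg hφ₀ hχ₀) (hW₀.le.trans hW), ?_⟩
  calc freeGreen a b k r s x t
      ≤ 3 * Real.exp (k * (min x t - a)) * (3 * Real.exp (k * (b - max x t)))
        / (k * Real.exp (k * (b - a))) :=
        div_le_div₀ (by positivity) (mul_le_mul hφ hχ hχ₀ (by positivity)) hW₀ hW
    _ = 9 / k * (Real.exp (k * (min x t - a)) * Real.exp (k * (b - max x t))
        / Real.exp (k * (b - a))) := by field_simp; norm_num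
    _ = 9 / k * Real.exp (-(k * |x - t|)) := by
        rw [← Real.exp_add, ← Real.exp_sub, ← max_sub_min_eq_abs' x t]
        ring_nf

theorem sq_mul_integral_freeGreen (hab : a ≤ b) (hk : k ≠ 0) :
    k ^ 2 * ∫ t in a..b, freeGreen a b k r s b t
      = (1 + s) * (reflectedExp k (-r) (b - a) - (1 - r))
        / (2 * reflectedExp k (-(r * s)) (b - a)) := by
  have hφ := integral_eq_sub_of_hasDerivWithinAt_Icc hab
    (isSolutionOn_reflectedExp_sub_const a b k r).hasDerivWithinAt'
    (continuousOn_const.mul (isSolutionOn_reflectedExp_sub_const a b k r).continuousOn)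
  have hG : ∀ t ∈ uIcc a b, freeGreen a b k r s b t
      = (1 + s) / (k ^ 2 * freeWronskian a b k r s) * (k ^ 2 * reflectedExp k r (t - a)) := by
    intro t ht
    rw [uIcc_of_le hab] at ht
    rw [freeGreen, greenFunction, min_eq_right ht.2, max_eq_left ht.2]
    simp only [reflectedExp, sub_self, mul_zero, neg_zero, Real.exp_zero]
    field_simp
  rw [intervalIntegral.integral_congr hG, intervalIntegral.integral_const_mul, hφ, freeWronskian]
  simp only [sub_self]
  have h₀ : reflectedExp k (-r) 0 = 1 - r := by simp [reflectedExp, sub_eq_add_neg]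
  rw [h₀]
  field_simp

theorem tendsto_sq_mul_integral_freeGreen (hab : a < b) {r s : ℝ → ℝ}
    (hr : ∀ᶠ k in atTop, r k ∈ Icc (-1) 2) (hs : Tendsto s atTop (𝓝 1)) :
    Tendsto (fun k => k ^ 2 * ∫ t in a..b, freeGreen a b k (r k) (s k) b t) atTop (𝓝 1) := by
  have hexp : Tendsto (fun k => Real.exp (-(k * (b - a)))) atTop (𝓝 0) :=
    Real.tendsto_exp_neg_atTop_nhds_zero.comp (tendsto_id.atTop_mul_const (sub_pos.2 hab))
  have hbdd {g : ℝ → ℝ} (hg : ∀ᶠ k in atTop, |g k| ≤ 3) :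
      Tendsto (fun k => g k * Real.exp (-(k * (b - a)))) atTop (𝓝 0) :=
    bdd_le_mul_tendsto_zero' 3 hg hexp
  have hr₁ := hbdd (g := r) (hr.mono fun k hk => abs_le.2 ⟨by linarith [hk.1], by linarith [hk.2]⟩)
  have hr₂ := hbdd (g := fun k => 1 - r k)
    (hr.mono fun k hk => abs_le.2 ⟨by linarith [hk.2], by linarith [hk.1]⟩)
  have hlim := ((hs.const_add 1).mul (((hr₁.mul hexp).const_sub 1).sub hr₂)).div
    ((((hr₁.mul hs).mul hexp).const_sub 1).const_mul 2) (by norm_num)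
  norm_num at hlim
  refine hlim.congr' ?_
  filter_upwards [eventually_ne_atTop 0] with k hk
  rw [sq_mul_integral_freeGreen hab.le hk, Pi.div_apply, reflectedExp, reflectedExp]
  have hinv : Real.exp (k * (b - a)) * Real.exp (-(k * (b - a))) = 1 := by
    rw [← Real.exp_add, add_neg_cancel, Real.exp_zero]
  refine Eq.trans ?_ (mul_div_mul_right _ _ (Real.exp_pos (-(k * (b - a)))).ne')
  congr 1
  · linear_combination -(1 + s k) * hinv
  · linear_combination -2 * hinv

theorem tendstoUniformlyOn_sq_mul_freeGreen (hab : a < b) {r s : ℝ → ℝ}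
    (hr : ∀ᶠ k in atTop, r k ∈ Icc (-1) 2) (hs : ∀ᶠ k in atTop, s k ∈ Icc (-1) 2) {U : Set ℝ}
    (hU : U ∈ 𝓝 b) :
    TendstoUniformlyOn (fun k t => k ^ 2 * freeGreen a b k (r k) (s k) b t) 0 atTop
      (Icc a b \ U) := by
  obtain ⟨δ, hδ, hδU⟩ := Metric.mem_nhds_iff.1 hU
  have hdecay : Tendsto (fun k => 9 / δ * (δ * k * Real.exp (-(δ * k)))) atTop (𝓝 0) := by
    have := (Real.tendsto_pow_mul_exp_neg_atTop_nhds_zero 1).comp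
      (tendsto_id.const_mul_atTop hδ)
    simpa using this.const_mul (9 / δ)
  rw [Metric.tendstoUniformlyOn_iff]
  intro ε hε
  filter_upwards [hr, hs, eventually_gt_atTop 0, hdecay.eventually_lt_const hε,
    (tendsto_id.atTop_mul_const (sub_pos.2 hab)).eventually_ge_atTop 2]
    with k hr hs hk hlt hkab t ht
  obtain ⟨hG₀, hG⟩ := freeGreen_mem_Icc hk hr hs hkab (right_mem_Icc.2 hab.le) ht.1
  have hδt : δ ≤ |b - t| := by
    by_contra! h
    exact ht.2 (hδU (by rwa [Metric.mem_ball, dist_comm, Real.dist_eq]))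
  rw [Pi.zero_apply, dist_zero_left, Real.norm_of_nonneg (by positivity)]
  calc k ^ 2 * freeGreen a b k (r k) (s k) b t
      ≤ k ^ 2 * (9 / k * Real.exp (-(k * |b - t|))) := by gcongr
    _ ≤ k ^ 2 * (9 / k * Real.exp (-(k * δ))) := by gcongr
    _ = 9 / δ * (δ * k * Real.exp (-(δ * k))) := by
        rw [mul_comm k δ]
        field_simp
    _ < ε := hlt

theorem tendsto_sq_mul_integral_freeGreen_mul (hab : a < b) {r s f : ℝ → ℝ}
    (hr : ∀ᶠ k in atTop, r k ∈ Icc (-1) 2) (hs : Tendsto s atTop (𝓝 1))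
    (hf : ContinuousOn f (Icc a b)) :
    Tendsto (fun k => k ^ 2 * ∫ t in a..b, freeGreen a b k (r k) (s k) b t * f t) atTop
      (𝓝 (f b)) := by
  have hs' : ∀ᶠ k in atTop, s k ∈ Icc (-1 : ℝ) 2 :=
    hs.eventually (Icc_mem_nhds (by norm_num) (by norm_num))
  have hset (g : ℝ → ℝ) (k : ℝ) : ∫ t in Icc a b, k ^ 2 * g t = k ^ 2 * ∫ t in a..b, g t := by
    rw [integral_Icc_eq_integral_Ioc, ← intervalIntegral.integral_of_le hab.le,
      intervalIntegral.integral_const_mul]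
  have hpeak := tendsto_setIntegral_peak_smul_of_integrableOn_of_tendsto (μ := volume)
    (φ := fun k t => k ^ 2 * freeGreen a b k (r k) (s k) b t) (g := f) measurableSet_Icc
    measurableSet_Icc Subset.rfl self_mem_nhdsWithin isCompact_Icc.measure_ne_top ?_
    (fun U hU hbU => tendstoUniformlyOn_sq_mul_freeGreen hab hr hs' (hU.mem_nhds hbU)) ?_ ?_
    (hf.integrableOn_compact isCompact_Icc) (hf b (right_mem_Icc.2 hab.le))
  · simpa only [smul_eq_mul, mul_assoc, hset] using hpeak
  · filter_upwards [hr, hs', eventually_gt_atTop 0,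
      (tendsto_id.atTop_mul_const (sub_pos.2 hab)).eventually_ge_atTop 2]
      with k hr hs hk hkab t ht
    exact mul_nonneg (sq_nonneg k)
      (freeGreen_mem_Icc hk hr hs hkab (right_mem_Icc.2 hab.le) ht).1
  · simpa only [hset] using tendsto_sq_mul_integral_freeGreen hab hr hs
  · refine Eventually.of_forall fun k => Continuous.aestronglyMeasurable ?_
    unfold freeGreen greenFunction reflectedExp
    fun_prop

end FreeGreen

/-! ### Stieltjes means of the eigenfunction expansion -/

section StieltjesMeans

variable {a b α β : ℝ} {q f : ℝ → ℝ}

section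

variable {W ρ M B F : ℝ} {φ φ' χ χ' : ℝ → ℝ}
  {hG : IsGreenPair a b α β (fun _ => ρ) W φ φ' χ χ'} {hq : ContinuousOn q (Icc a b)}
  {R : L2Icc a b →L[ℝ] C(Icc a b, ℝ)}

theorem IsResolvent.norm_apply_toL2_le (hR : IsResolvent hG hq R) (hab : a ≤ b)
    (hf : ContinuousOn f (Icc a b)) (hM₀ : 0 ≤ M)
    (hM : ∀ x ∈ Icc a b, ∀ t ∈ Icc a b, |greenFunction W φ χ x t| ≤ M)
    (hB : ∀ x ∈ Icc a b, |q x| ≤ B) (hF : ∀ x ∈ Icc a b, |f x| ≤ F)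
    (hMB : M * B * (b - a) ≤ 1 / 2) :
    ‖R (toL2 a b (restrictIcc hf))‖ ≤ 2 * M * F * (b - a) := by
  have ha := left_mem_Icc.2 hab
  have hB₀ : 0 ≤ B := (abs_nonneg _).trans (hB a ha)
  have hF₀ : 0 ≤ F := (abs_nonneg _).trans (hF a ha)
  set u := R (toL2 a b (restrictIcc hf))
  obtain ⟨v, hvc, huv⟩ := exists_continuousOn_eq_restrictIcc u
  have hv (x : Icc a b) : u x = v x := by rw [huv, restrictIcc_apply]
  have hsource : ∀ t ∈ Icc a b, |f t - q t * v t| ≤ F + B * ‖u‖ := fun t ht => by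
    refine (abs_sub _ _).trans (add_le_add (hF t ht) ?_)
    rw [abs_mul, ← hv ⟨t, ht⟩]
    exact mul_le_mul (hB t ht) (u.norm_coe_le_norm _) (abs_nonneg _) hB₀
  have hnorm : ‖u‖ ≤ M * (F + B * ‖u‖) * (b - a) := by
    refine (ContinuousMap.norm_le _ (mul_nonneg (by positivity) (sub_nonneg.2 hab))).2 fun x => ?_
    rw [hv, hR.apply_toL2_eq_integral hab (fun x => restrictIcc_apply hf x) hv x.2,
      Real.norm_eq_abs]
    refine abs_integral_le_mul_sub hab fun t ht => ?_
    rw [abs_mul]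
    exact mul_le_mul (hM x x.2 t ht) (hsource t ht) (abs_nonneg _) hM₀
  linarith [mul_le_mul_of_nonneg_right hMB (norm_nonneg u)]

theorem IsResolvent.abs_apply_sub_integral_le (hR : IsResolvent hG hq R) (hab : a ≤ b)
    (hf : ContinuousOn f (Icc a b)) (hM₀ : 0 ≤ M)
    (hM : ∀ x ∈ Icc a b, ∀ t ∈ Icc a b, greenFunction W φ χ x t ∈ Icc 0 M)
    (hB : ∀ x ∈ Icc a b, |q x| ≤ B) (hF : ∀ x ∈ Icc a b, |f x| ≤ F)
    (hMB : M * B * (b - a) ≤ 1 / 2) (x : Icc a b) :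
    |R (toL2 a b (restrictIcc hf)) x - ∫ t in a..b, greenFunction W φ χ x t * f t|
      ≤ 2 * M * F * (b - a) * B * ∫ t in a..b, greenFunction W φ χ x t := by
  have hnorm := hR.norm_apply_toL2_le hab hf hM₀
    (fun x hx t ht => (abs_of_nonneg (hM x hx t ht).1).trans_le (hM x hx t ht).2) hB hF hMB
  set u := R (toL2 a b (restrictIcc hf))
  obtain ⟨v, hvc, huv⟩ := exists_continuousOn_eq_restrictIcc u
  have hv (x : Icc a b) : u x = v x := by rw [huv, restrictIcc_apply]
  have hcont := hG.continuousOn_greenFunction_right x.2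
  have hint {g : ℝ → ℝ} (hg : ContinuousOn g (Icc a b)) :=
    (hcont.fun_mul hg).intervalIntegrable_of_Icc hab (μ := volume)
  rw [hv, hR.apply_toL2_eq_integral hab (fun x => restrictIcc_apply hf x) hv x.2,
    ← intervalIntegral.integral_sub (hint (hf.fun_sub (hq.fun_mul hvc))) (hint hf), mul_comm,
    ← intervalIntegral.integral_mul_const]
  refine intervalIntegral.abs_integral_le_integral_abs hab |>.trans
    (intervalIntegral.integral_mono_on hab ?_ (hint continuousOn_const) fun t ht => ?_)
  · exact (hint (hf.fun_sub (hq.fun_mul hvc))).sub (hint hf) |>.abs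
  · have hvt : |v t| ≤ 2 * M * F * (b - a) := by
      rw [← hv ⟨t, ht⟩]
      exact (u.norm_coe_le_norm _).trans hnorm
    rw [← mul_sub, sub_sub_cancel_left, abs_mul, abs_neg, abs_mul, mul_comm |q t|,
      abs_of_nonneg (hM x x.2 t ht).1]
    exact mul_le_mul_of_nonneg_left (mul_le_mul hvt (hB t ht) (abs_nonneg _)
      ((abs_nonneg _).trans hvt)) (hM x x.2 t ht).1

end

theorem eventually_exists_isResolvent (hab : a < b) (hq : ContinuousOn q (Icc a b)) (α β : ℝ) :
    ∀ᶠ k : ℝ in atTop, ∃ (W : ℝ) (φ φ' χ χ' : ℝ → ℝ)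
      (hG : IsGreenPair a b α β (fun _ => k ^ 2) W φ φ' χ χ') (R : _), IsResolvent hG hq R ∧
      greenFunction W φ χ = freeGreen a b k (reflectionCoeff α k) (reflectionCoeff (-β) k) ∧
      ∀ x ∈ Icc a b, ∀ t ∈ Icc a b, greenFunction W φ χ x t ∈ Icc 0 (9 / k) := by
  obtain ⟨ε, hε, hres⟩ := exists_isResolvent hq
  have hsmall : Tendsto (fun k : ℝ => 9 / k) atTop (𝓝 0) :=
    tendsto_const_nhds.div_atTop tendsto_id
  filter_upwards [eventually_reflectionCoeff_mem_Icc α, eventually_reflectionCoeff_mem_Icc (-β),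
    eventually_gt_atTop 0, eventually_ne_atTop (Real.cot α), eventually_ne_atTop (Real.cot (-β)),
    (tendsto_id.atTop_mul_const (sub_pos.2 hab)).eventually_ge_atTop 2,
    hsmall.eventually_lt_const hε] with k hr hs hk hkα hkβ hkab hkε
  have hW := mul_exp_le_freeWronskian hk.le hr hs hkab
  have hG := isGreenPair_reflectedExp hkα hkβ ((by positivity : (0 : ℝ) < _).trans_le hW).ne'
  have hM : ∀ x ∈ Icc a b, ∀ t ∈ Icc a b,
      freeGreen a b k (reflectionCoeff α k) (reflectionCoeff (-β) k) x t ∈ Icc 0 (9 / k) := by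
    intro x hx t ht
    obtain ⟨hG₀, hG₁⟩ := freeGreen_mem_Icc hk hr hs hkab hx ht
    refine ⟨hG₀, hG₁.trans (mul_le_of_le_one_right (by positivity) ?_)⟩
    exact Real.exp_le_one_iff.2 (neg_nonpos.2 (by positivity))
  obtain ⟨R, hR⟩ := hres hG (by positivity) hkε fun x hx t ht =>
    (abs_of_nonneg (hM x hx t ht).1).trans_le (hM x hx t ht).2
  exact ⟨_, _, _, _, _, hG, R, hR, rfl, hM⟩

namespace IsSLEigensystem

variable {lam : ℕ → ℝ} {y : ℕ → ℝ → ℝ} (hS : IsSLEigensystem a b q α β lam y)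
include hS

theorem tendsto_atTop (hab : a < b) (hq : ContinuousOn q (Icc a b)) : Tendsto lam atTop atTop := by
  obtain ⟨k, W, φ, φ', χ, χ', hG, R, hR, -⟩ := (eventually_exists_isResolvent hab hq α β).exists
  exact tendsto_atTop_atTop_of_monotone hS.strictMono.monotone fun L =>
    (hS.exists_lt hR hab.le L).imp fun _ => le_of_lt

theorem exists_eventually_hasSum_abs_sub_integral_le (hab : a < b)
    (hq : ContinuousOn q (Icc a b)) (hf : ContinuousOn f (Icc a b)) :
    ∃ C, ∀ᶠ k : ℝ in atTop, ∀ x ∈ Icc a b, ∃ s,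
      HasSum (fun n => (∫ t in a..b, y n t * f t) * y n x / (lam n + k ^ 2)) s ∧
      |s - ∫ t in a..b,
          freeGreen a b k (reflectionCoeff α k) (reflectionCoeff (-β) k) x t * f t|
        ≤ C / k * ∫ t in a..b,
          freeGreen a b k (reflectionCoeff α k) (reflectionCoeff (-β) k) x t := by
  obtain ⟨B, hB⟩ := isCompact_Icc.exists_bound_of_continuousOn hq
  obtain ⟨F, hF⟩ := isCompact_Icc.exists_bound_of_continuousOn hf
  refine ⟨18 * F * (b - a) * B, ?_⟩
  filter_upwards [eventually_exists_isResolvent hab hq α β, eventually_gt_atTop 0,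
    eventually_ge_atTop (18 * B * (b - a))] with k hres hk hkB x hx
  obtain ⟨W, φ, φ', χ, χ', hG, R, hR, hfree, hM⟩ := hres
  refine ⟨_, hS.hasSum_resolvent_apply hR hab hf ⟨x, hx⟩, ?_⟩
  rw [← hfree]
  refine (hR.abs_apply_sub_integral_le hab.le hf (by positivity) hM hB hF ?_ ⟨x, hx⟩).trans_eq ?_
  · rw [div_mul_eq_mul_div, div_mul_eq_mul_div, div_le_iff₀ hk]
    linarith
  · ring

theorem tendsto_tsum_stieltjes (hab : a < b) (hq : ContinuousOn q (Icc a b))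
    (hf : ContinuousOn f (Icc a b)) (hβ : Real.sin β ≠ 0) :
    (∀ᶠ k : ℝ in atTop, Summable fun n =>
      (∫ t in a..b, y n t * f t) * y n b * (k ^ 2 / (lam n + k ^ 2))) ∧
    Tendsto (fun k : ℝ => ∑' n,
      (∫ t in a..b, y n t * f t) * y n b * (k ^ 2 / (lam n + k ^ 2))) atTop (𝓝 (f b)) := by
  obtain ⟨C, hC⟩ := hS.exists_eventually_hasSum_abs_sub_integral_le hab hq hf
  have hcomm (n : ℕ) (k : ℝ) : (∫ t in a..b, y n t * f t) * y n b * (k ^ 2 / (lam n + k ^ 2))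
      = k ^ 2 * ((∫ t in a..b, y n t * f t) * y n b / (lam n + k ^ 2)) := by ring
  simp only [hcomm]
  have hb := right_mem_Icc.2 hab.le
  have hr := eventually_reflectionCoeff_mem_Icc α
  have hs : Tendsto (reflectionCoeff (-β)) atTop (𝓝 1) :=
    tendsto_reflectionCoeff (by rwa [Real.sin_neg, neg_ne_zero])
  refine ⟨hC.mono fun k hk => ?_, ?_⟩
  · obtain ⟨s, hs, -⟩ := hk b hb
    exact hs.summable.mul_left _
  have herr : Tendsto (fun k => C / k * (k ^ 2 * ∫ t in a..b,
      freeGreen a b k (reflectionCoeff α k) (reflectionCoeff (-β) k) b t)) atTop (𝓝 0) := by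
    simpa using (tendsto_const_nhds.div_atTop tendsto_id).mul
      (tendsto_sq_mul_integral_freeGreen hab hr hs)
  rw [← zero_add (f b)]
  refine (squeeze_zero_norm' (hC.mono fun k hk => ?_) herr).add
    (tendsto_sq_mul_integral_freeGreen_mul hab hr hs hf) |>.congr fun k => sub_add_cancel _ _
  obtain ⟨s, hs, hle⟩ := hk b hb
  rw [tsum_mul_left, hs.tsum_eq, ← mul_sub, Real.norm_eq_abs, abs_mul, abs_of_nonneg (sq_nonneg k)]
  exact (mul_le_mul_of_nonneg_left hle (sq_nonneg k)).trans_eq (by ring)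

end IsSLEigensystem

end StieltjesMeans

/-! ### Convergence at the right end point -/

theorem tendsto_sq_div_add_sq (l : ℝ) :
    Tendsto (fun κ : ℝ => κ ^ 2 / (l + κ ^ 2)) atTop (𝓝 1) := by
  have hden : Tendsto (fun κ : ℝ => l + κ ^ 2) atTop atTop :=
    tendsto_atTop_add_const_left _ _ (tendsto_pow_atTop two_ne_zero)
  have hlim := (tendsto_const_nhds (x := l)).div_atTop hden |>.const_sub 1
  rw [sub_zero] at hlim
  refine hlim.congr' ?_
  filter_upwards [hden.eventually_gt_atTop 0] with κ hκ
  rw [one_sub_div hκ.ne', add_sub_cancel_left]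

theorem tendsto_tsum_stieltjes_nat_add {lam d : ℕ → ℝ} {s : ℝ}
    (hsum : ∀ᶠ κ : ℝ in atTop, Summable fun n => d n * (κ ^ 2 / (lam n + κ ^ 2)))
    (hs : Tendsto (fun κ : ℝ => ∑' n, d n * (κ ^ 2 / (lam n + κ ^ 2))) atTop (𝓝 s)) (m : ℕ) :
    Tendsto (fun κ : ℝ => ∑' j, d (j + m) * (κ ^ 2 / (lam (j + m) + κ ^ 2))) atTop
      (𝓝 (s - ∑ n ∈ Finset.range m, d n)) := by
  have hfin : Tendsto (fun κ : ℝ => ∑ n ∈ Finset.range m, d n * (κ ^ 2 / (lam n + κ ^ 2))) atTop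
      (𝓝 (∑ n ∈ Finset.range m, d n)) := tendsto_finsetSum _ fun n _ => by
    simpa using (tendsto_sq_div_add_sq (lam n)).const_mul (d n)
  refine (hs.sub hfin).congr' ?_
  filter_upwards [hsum] with κ hκ
  rw [← hκ.sum_add_tsum_nat_add m, add_sub_cancel_left]

theorem tendsto_sum_of_tendsto_tsum_stieltjes {lam d : ℕ → ℝ} {c C s : ℝ} {m : ℕ}
    (hsep : IsSeparated c fun j => √(lam (j + m)))
    (hd : ∀ j, |d (j + m)| ≤ C / √(lam (j + m)))
    (hsum : ∀ᶠ κ : ℝ in atTop, Summable fun n => d n * (κ ^ 2 / (lam n + κ ^ 2)))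
    (hs : Tendsto (fun κ : ℝ => ∑' n, d n * (κ ^ 2 / (lam n + κ ^ 2))) atTop (𝓝 s)) :
    Tendsto (fun N => ∑ n ∈ Finset.range N, d n) atTop (𝓝 s) := by
  have hnode (κ : ℝ) (j : ℕ) :
      (node κ √(lam (j + m)) : ℝ) = κ ^ 2 / (lam (j + m) + κ ^ 2) := by
    rw [coe_node, Real.sq_sqrt (Real.sqrt_pos.1 (hsep.pos j)).le]
  have htail := tendsto_sum_of_tendsto_tsum_node (b := fun j => d (j + m)) hsep hd
    (by simpa only [hnode] using tendsto_tsum_stieltjes_nat_add hsum hs m)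
  rw [← tendsto_add_atTop_iff_nat m]
  simpa only [add_comm _ m, Finset.sum_range_add, add_sub_cancel] using
    htail.const_add (∑ n ∈ Finset.range m, d n)

namespace IsSLEigensystem

variable {a b α β : ℝ} {q f : ℝ → ℝ} {lam : ℕ → ℝ} {y : ℕ → ℝ → ℝ}
  (hS : IsSLEigensystem a b q α β lam y)
include hS

theorem exists_isSolutionOn_sq_sqrt (hq : ContinuousOn q (Icc a b)) {n : ℕ} (hn : 0 ≤ lam n) :
    ∃ y', IsSolutionOn a b (fun x => q x - √(lam n) ^ 2) (y n) y' ∧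
      BoundaryCondition α (y n a) (y' a) ∧ ∃ x ∈ Icc a b, y n x ≠ 0 := by
  obtain ⟨y', hy, hbc, -, hne⟩ := (isSLEigenpair_iff hq).1 (hS.isSLEigenpair n)
  exact ⟨y', by rwa [Real.sq_sqrt hn], hbc, hne⟩

theorem exists_gap_sqrt (hab : a < b) (hq : ContinuousOn q (Icc a b)) :
    ∃ c > 0, ∀ᶠ n in atTop, √(lam n) + c ≤ √(lam (n + 1)) := by
  obtain ⟨B, hB⟩ := isCompact_Icc.exists_bound_of_continuousOn hq
  have : 0 < b - a := sub_pos.2 hab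
  set K := max (max 1 |Real.cot α|) (4 * Real.exp (B * (b - a)) ^ 2
    * (2 + B * (b - a) + 2 * B * (b - a) ^ 2) / (b - a))
  refine ⟨(4 * (b - a) * Real.exp (B * (b - a)) ^ 2)⁻¹, by positivity, ?_⟩
  have hlam := hS.tendsto_atTop hab hq
  filter_upwards [hlam.eventually_ge_atTop 0,
    (Real.tendsto_sqrt_atTop.comp hlam).eventually_ge_atTop K] with n hn hK
  have hlt := hS.strictMono n.lt_succ_self
  have hle : √(lam n) ≤ √(lam (n + 1)) := Real.sqrt_le_sqrt hlt.le
  obtain ⟨u', hu, hua, hune⟩ := hS.exists_isSolutionOn_sq_sqrt hq hn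
  obtain ⟨v', hv, hva, hvne⟩ := hS.exists_isSolutionOn_sq_sqrt hq (hn.trans hlt.le)
  have hgap := inv_le_abs_sub_of_integral_mul_eq_zero hab hq hv hu hva hua hvne hune
    (integral_mul_eq_zero_of_isSLEigenpair hab.le hq (hS.isSLEigenpair _) (hS.isSLEigenpair _)
      hlt.ne') hB ((le_max_left _ _).trans (le_max_left _ _))
    ((le_max_right _ _).trans (le_max_left _ _)) (le_max_right _ _) (hK.trans hle) hK
  rw [abs_of_nonneg (sub_nonneg.2 hle)] at hgap
  linarith

theorem exists_isSeparated_sqrt (hab : a < b) (hq : ContinuousOn q (Icc a b)) :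
    ∃ c, ∀ᶠ m in atTop, IsSeparated c fun j => √(lam (j + m)) := by
  obtain ⟨c, hc, hgap⟩ := hS.exists_gap_sqrt hab hq
  refine ⟨c, ?_⟩
  filter_upwards [eventually_forall_ge_atTop.2 hgap, (Real.tendsto_sqrt_atTop.comp
    (hS.tendsto_atTop hab hq)).eventually_ge_atTop c] with m hm hcm
  exact ⟨hc, by simpa using hcm, fun j => by simpa only [add_right_comm] using hm (j + m) (by simp)⟩

theorem exists_abs_coeff_mul_le (hab : a < b) (hq : ContinuousOn q (Icc a b))
    (hf : ContinuousOn f (Icc a b)) (hbv : BoundedVariationOn f (Icc a b)) :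
    ∃ C, ∀ᶠ n in atTop, ∀ x ∈ Icc a b, |(∫ t in a..b, y n t * f t) * y n x| ≤ C / √(lam n) := by
  obtain ⟨C, K, hC⟩ := exists_abs_integral_mul_mul_le_div hab hq hf hbv
  have hlam := hS.tendsto_atTop hab hq
  refine ⟨C, ?_⟩
  filter_upwards [hlam.eventually_ge_atTop 0,
    (Real.tendsto_sqrt_atTop.comp hlam).eventually_ge_atTop K] with n hn hK
  obtain ⟨y', hy, -⟩ := hS.exists_isSolutionOn_sq_sqrt hq hn
  exact hC _ _ y' hK hy (hS.integral_sq n)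

theorem tendsto_sum_right (hab : a < b) (hq : ContinuousOn q (Icc a b))
    (hf : ContinuousOn f (Icc a b)) (hbv : BoundedVariationOn f (Icc a b))
    (hβ : Real.sin β ≠ 0) :
    Tendsto (fun N => ∑ n ∈ Finset.range N, (∫ t in a..b, y n t * f t) * y n b) atTop
      (𝓝 (f b)) := by
  obtain ⟨c, hsep⟩ := hS.exists_isSeparated_sqrt hab hq
  obtain ⟨C, hC⟩ := hS.exists_abs_coeff_mul_le hab hq hf hbv
  obtain ⟨m, hsep, hC⟩ := (hsep.and (eventually_forall_ge_atTop.2 hC)).exists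
  obtain ⟨hsum, hlim⟩ := hS.tendsto_tsum_stieltjes hab hq hf hβ
  exact tendsto_sum_of_tendsto_tsum_stieltjes hsep
    (fun j => hC (j + m) (Nat.le_add_left m j) b (right_mem_Icc.2 hab.le)) hsum hlim

end IsSLEigensystem

theorem eq_zero_of_isSLEigenpair_of_sin_eq_zero {a b α β l : ℝ} {q y : ℝ → ℝ}
    (h : IsSLEigenpair a b q α β l y) (hβ : Real.sin β = 0) : y b = 0 := by
  obtain ⟨y', -, -, -, -, -, -, -, hbc⟩ := h
  rw [hβ, mul_zero, add_zero] at hbc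
  refine (mul_eq_zero.1 hbc).resolve_right fun hcos => ?_
  simpa [hβ, hcos] using Real.sin_sq_add_cos_sq β

end SturmLiouville

/-- At the right endpoint `x = b` the series `∑ cₙ yₙ(b)` converges; its sum equals
`f(b)` if `sin β ≠ 0` and equals `0` in the Dirichlet case `sin β = 0`. -/
theorem sl_expansion_right_endpoint
    (a b : ℝ) (hab : a < b)
    (q : ℝ → ℝ) (hq : ContinuousOn q (Set.Icc a b))
    (α β : ℝ) (hα : α ∈ Set.Ico 0 (2 * Real.pi)) (hβ : β ∈ Set.Ico 0 (2 * Real.pi))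
    (lam : ℕ → ℝ) (y : ℕ → ℝ → ℝ)
    (heig : ∀ n, IsSLEigenpair a b q α β (lam n) (y n))
    (hmono : StrictMono lam)
    (hcomplete : ∀ μ z, IsSLEigenpair a b q α β μ z → ∃ n, lam n = μ)
    (hnorm : ∀ n, ∫ x in a..b, (y n x) ^ 2 = 1)
    (f : ℝ → ℝ) (hf : ContinuousOn f (Set.Icc a b))
    (hbv : BoundedVariationOn f (Set.Icc a b))
    (c : ℕ → ℝ) (hc : ∀ n, c n = ∫ x in a..b, y n x * f x) :
    Filter.Tendsto (fun N : ℕ => ∑ n ∈ Finset.range N, c n * y n b)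
      Filter.atTop (nhds (if Real.sin β ≠ 0 then f b else 0)) := by
  split_ifs with hsin
  · simpa only [hc] using
      (⟨heig, hmono, hcomplete, hnorm⟩ :
        SturmLiouville.IsSLEigensystem a b q α β lam y).tendsto_sum_right hab hq hf hbv hsin
  · have hy n := SturmLiouville.eq_zero_of_isSLEigenpair_of_sin_eq_zero (heig n) (not_not.1 hsin)
    simp only [hy, mul_zero, Finset.sum_const_zero, tendsto_const_nhds]
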